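/- arXiv:math/0310418 — 9 statements merged into one kernel-verified Lean document; each statement's English description precedes it below -/
import Mathlib

section
/- Let Γ₀ be a linearly ordered commutative group with zero, A a commutative ring, and |·| : A → Γ₀ a power-multiplicative seminorm. For a monic polynomial p = T^m + a₁T^{m-1} + ⋯ + a_m ∈ A[T] and γ ∈ Γ₀, say that p is γ-bounded if |a_i| ≤ γ^i for all i = 1,…,m (this expresses that the spectral value σ(p) := max_i |a_i|^{1/i} satisfies σ(p) ≤ γ). Then: (1) if p and q are monic polynomials that are both γ-bounded, then the product p·q is γ-bounded (i.e. σ(pq) ≤ max(σ(p),σ(q))); (2) if moreover |·| is a valuation (i.e. |x·y| = |x|·|y| for all x,y ∈ A), then conversely, if p·q is γ-bounded then both p and q are γ-bounded (i.e. σ(pq) = max(σ(p),σ(q))). -/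
/-- A monic polynomial `p = T^m + a₁T^{m-1} + ⋯ + a_m` is `γ`-bounded for a seminorm `ν`
if `ν aᵢ ≤ γ^i` for `i = 1, …, m`; in terms of coefficients, `ν (p.coeff k) ≤ γ^(m - k)`
for every `k` (the cases `k ≥ m` being trivial).  This expresses that the spectral value
`σ(p) = max_i ν(aᵢ)^{1/i}` satisfies `σ(p) ≤ γ`. -/
def SpectralValueLE {A Γ₀ : Type*} [CommRing A] [LinearOrderedCommGroupWithZero Γ₀]
    (ν : A → Γ₀) (γ : Γ₀) (p : Polynomial A) : Prop :=
  ∀ k : ℕ, ν (p.coeff k) ≤ γ ^ (p.natDegree - k)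

/-!
The inequality `σ(pq) ≤ max(σ(p), σ(q))` is read off the convolution formula for the coefficients.

For the converse let `v` be a valuation and `p`, `q` monic of degrees `m`, `n`. If `γ ≠ 0`, then
`γ`-boundedness of `p` means that its Gauss value `max_k v(p_k) γ^k` is at most `γ^m`. Gauss values
of monic polynomials are at least `γ^m` and `γ^n`, and their product is at most the Gauss value of
`pq` (Gauss's lemma: look at the coefficient of `pq` at the sum of the least indices attaining the
two maxima), so the bound `γ^(m+n)` for `pq` forces the bounds for `p` and `q`.
If `γ = 0`, then `p` is `γ`-bounded exactly when it reduces to `T^m` modulo the support of `v`. The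
support is prime, and over a domain the only monic divisors of a power of `T` are powers of `T`.
-/

open scoped Polynomial

theorem isNonarchimedean_of_map_sub_le_max {A R : Type*} [AddGroup A] [LinearOrder R] {ν : A → R}
    (hν0 : ∀ x, ν 0 ≤ ν x) (hνsub : ∀ x y, ν (x - y) ≤ max (ν x) (ν y)) :
    IsNonarchimedean ν := by
  intro x y
  have hneg : ν (-y) ≤ ν y := by simpa [hν0 y] using hνsub 0 y
  calc ν (x + y) = ν (x - -y) := by rw [sub_neg_eq_add]
    _ ≤ max (ν x) (ν (-y)) := hνsub x (-y)
    _ ≤ max (ν x) (ν y) := max_le_max_left _ hneg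

theorem SpectralValueLE.mul {A Γ₀ : Type*} [CommRing A] [LinearOrderedCommGroupWithZero Γ₀]
    {ν : A → Γ₀} {γ : Γ₀} {p q : A[X]} (hν0 : ν 0 = 0) (hνadd : IsNonarchimedean ν)
    (hνmul : ∀ x y, ν (x * y) ≤ ν x * ν y)
    (hdeg : (p * q).natDegree = p.natDegree + q.natDegree)
    (hp : SpectralValueLE ν γ p) (hq : SpectralValueLE ν γ q) :
    SpectralValueLE ν γ (p * q) := by
  intro k
  rw [Polynomial.coeff_mul]
  refine (hνadd.apply_sum_le_sup ⟨(0, k), by simp⟩).trans (Finset.sup'_le _ _ ?_)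
  rintro ⟨i, j⟩ hij
  obtain rfl : i + j = k := Finset.HasAntidiagonal.mem_antidiagonal.mp hij
  rcases lt_or_ge p.natDegree i with hi | hi
  · simp [Polynomial.coeff_eq_zero_of_natDegree_lt hi, hν0]
  rcases lt_or_ge q.natDegree j with hj | hj
  · simp [Polynomial.coeff_eq_zero_of_natDegree_lt hj, hν0]
  calc ν (p.coeff i * q.coeff j) ≤ ν (p.coeff i) * ν (q.coeff j) := hνmul _ _
    _ ≤ γ ^ (p.natDegree - i) * γ ^ (q.natDegree - j) := mul_le_mul' (hp i) (hq j)
    _ = γ ^ ((p * q).natDegree - (i + j)) := by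
      rw [← pow_add, hdeg, tsub_add_tsub_comm hi hj]

section GaussValue

variable {A Γ₀ : Type*} [Ring A] [LinearOrderedCommGroupWithZero Γ₀]

/-- The Gauss value `max_k v(p_k) c^k` of a polynomial `p` at radius `c`, for a valuation `v` with
values in an arbitrary linearly ordered group with zero (`Polynomial.gaussNorm` is real-valued).
The zero polynomial has Gauss value `⊥ = 0`. -/
def gaussValue (v : Valuation A Γ₀) (c : Γ₀) (p : A[X]) : Γ₀ :=
  p.support.sup fun k ↦ v (p.coeff k) * c ^ k

variable {v : Valuation A Γ₀} {c : Γ₀}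

theorem gaussValue_le_iff {p : A[X]} {a : Γ₀} :
    gaussValue v c p ≤ a ↔ ∀ k, v (p.coeff k) * c ^ k ≤ a := by
  refine Finset.sup_le_iff.trans ⟨fun h k ↦ ?_, fun h k _ ↦ h k⟩
  by_cases hk : p.coeff k = 0
  · simp [hk]
  · exact h k (Polynomial.mem_support_iff.mpr hk)

theorem le_gaussValue (p : A[X]) (k : ℕ) : v (p.coeff k) * c ^ k ≤ gaussValue v c p :=
  gaussValue_le_iff.mp le_rfl k

theorem pow_natDegree_le_gaussValue {p : A[X]} (hp : p.Monic) :
    c ^ p.natDegree ≤ gaussValue v c p := by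
  simpa [hp.coeff_natDegree] using le_gaussValue (v := v) (c := c) p p.natDegree

theorem exists_coeff_eq_gaussValue (v : Valuation A Γ₀) (c : Γ₀) (p : A[X]) :
    ∃ k, v (p.coeff k) * c ^ k = gaussValue v c p := by
  rcases p.support.eq_empty_or_nonempty with hp | hp
  · exact ⟨0, by simp [gaussValue, Polynomial.support_eq_empty.mp hp, bot_eq_zero]⟩
  · obtain ⟨k, -, hk⟩ := Finset.exists_mem_eq_sup _ hp fun k ↦ v (p.coeff k) * c ^ k
    exact ⟨k, hk.symm⟩

theorem exists_least_coeff_eq_gaussValue (v : Valuation A Γ₀) (c : Γ₀) (p : A[X]) :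
    ∃ i, v (p.coeff i) * c ^ i = gaussValue v c p ∧
      ∀ k < i, v (p.coeff k) * c ^ k < gaussValue v c p := by
  classical
  have hex := exists_coeff_eq_gaussValue v c p
  exact ⟨Nat.find hex, Nat.find_spec hex,
    fun k hk ↦ (le_gaussValue p k).lt_of_ne (Nat.find_min hex hk)⟩

theorem valuation_mul_mul_pow_add (v : Valuation A Γ₀) (c : Γ₀) (x y : A) (i j : ℕ) :
    v (x * y) * c ^ (i + j) = v x * c ^ i * (v y * c ^ j) := by
  rw [map_mul, pow_add, mul_mul_mul_comm]

theorem gaussValue_mul_gaussValue_le (p q : A[X]) :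
    gaussValue v c p * gaussValue v c q ≤ gaussValue v c (p * q) := by
  rcases eq_zero_or_pos (gaussValue v c p) with hp0 | hp0
  · simp [hp0]
  rcases eq_zero_or_pos (gaussValue v c q) with hq0 | hq0
  · simp [hq0]
  obtain ⟨i, hi, hi_least⟩ := exists_least_coeff_eq_gaussValue v c p
  obtain ⟨j, hj, hj_least⟩ := exists_least_coeff_eq_gaussValue v c q
  have hdominant : ∀ ab ∈ Finset.HasAntidiagonal.antidiagonal (i + j) \ {(i, j)},
      v (p.coeff ab.1 * q.coeff ab.2) < v (p.coeff i * q.coeff j) := by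
    rintro ⟨a, b⟩ hab
    obtain ⟨hsum, hne⟩ : a + b = i + j ∧ ¬(a = i ∧ b = j) := by simpa using hab
    refine lt_of_mul_lt_mul_right (a := c ^ (i + j)) ?_ zero_le
    rw [valuation_mul_mul_pow_add _ _ (p.coeff i), hi, hj, ← hsum, valuation_mul_mul_pow_add]
    obtain ha | hb : a < i ∨ b < j := by omega
    · exact mul_lt_mul_of_lt_of_le_of_nonneg_of_pos (hi_least a ha) (le_gaussValue q b) zero_le hq0
    · exact mul_lt_mul_of_le_of_lt_of_nonneg_of_pos (le_gaussValue p a) (hj_least b hb) zero_le hp0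
  have hcoeff : v ((p * q).coeff (i + j)) = v (p.coeff i * q.coeff j) := by
    rw [Polynomial.coeff_mul]
    exact v.map_sum_eq_of_lt (j := (i, j)) (by simp) hdominant
  calc gaussValue v c p * gaussValue v c q = v ((p * q).coeff (i + j)) * c ^ (i + j) := by
        rw [hcoeff, valuation_mul_mul_pow_add, hi, hj]
    _ ≤ gaussValue v c (p * q) := le_gaussValue _ _

end GaussValue

theorem eq_X_pow_natDegree_of_monic_of_dvd_X_pow {R : Type*} [CommRing R] [IsDomain R]
    {f : R[X]} {n : ℕ} (hf : f.Monic) (hdvd : f ∣ Polynomial.X ^ n) :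
    f = Polynomial.X ^ f.natDegree := by
  obtain ⟨i, -, hassoc⟩ := (dvd_prime_pow Polynomial.prime_X n).mp hdvd
  obtain rfl := Polynomial.eq_of_monic_of_associated hf (Polynomial.monic_X_pow i) hassoc
  rw [Polynomial.natDegree_X_pow]

section Valuation

variable {A Γ₀ : Type*} [CommRing A] [LinearOrderedCommGroupWithZero Γ₀] {v : Valuation A Γ₀}
  {γ : Γ₀} {p q : A[X]}

theorem spectralValueLE_iff_gaussValue_le (hγ : γ ≠ 0) :
    SpectralValueLE v γ p ↔ gaussValue v γ p ≤ γ ^ p.natDegree := by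
  rw [gaussValue_le_iff]
  refine forall_congr' fun k ↦ ?_
  rcases lt_or_ge p.natDegree k with hk | hk
  · simp [Polynomial.coeff_eq_zero_of_natDegree_lt hk]
  · rw [← pow_sub_mul_pow γ hk, mul_le_mul_iff_left₀ (zero_lt_iff.mpr (pow_ne_zero k hγ))]

theorem spectralValueLE_zero_iff_map_eq_X_pow (hp : p.Monic) :
    SpectralValueLE v 0 p ↔ p.map (Ideal.Quotient.mk v.supp) = Polynomial.X ^ p.natDegree := by
  rw [Polynomial.ext_iff]
  refine forall_congr' fun k ↦ ?_
  rw [Polynomial.coeff_map, Polynomial.coeff_X_pow]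
  rcases lt_trichotomy k p.natDegree with hk | rfl | hk
  · rw [zero_pow (Nat.sub_ne_zero_of_lt hk), le_zero_iff, if_neg hk.ne,
      Ideal.Quotient.eq_zero_iff_mem, Valuation.mem_supp_iff]
  · simp [hp.coeff_natDegree]
  · simp [Polynomial.coeff_eq_zero_of_natDegree_lt hk, hk.ne']

theorem SpectralValueLE.zero_of_mul_left (hp : p.Monic) (hq : q.Monic)
    (hpq : SpectralValueLE v 0 (p * q)) : SpectralValueLE v 0 p := by
  rw [spectralValueLE_zero_iff_map_eq_X_pow (hp.mul hq), Polynomial.map_mul] at hpq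
  rw [spectralValueLE_zero_iff_map_eq_X_pow hp, ← hp.natDegree_map (Ideal.Quotient.mk v.supp)]
  exact eq_X_pow_natDegree_of_monic_of_dvd_X_pow (hp.map _) (Dvd.intro _ hpq)

theorem SpectralValueLE.of_mul_left_of_ne_zero (hγ : γ ≠ 0) (hq : q.Monic)
    (hdeg : (p * q).natDegree = p.natDegree + q.natDegree)
    (hpq : SpectralValueLE v γ (p * q)) : SpectralValueLE v γ p := by
  rw [spectralValueLE_iff_gaussValue_le hγ] at hpq ⊢
  refine le_of_mul_le_mul_right ?_ (zero_lt_iff.mpr (pow_ne_zero q.natDegree hγ))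
  calc gaussValue v γ p * γ ^ q.natDegree
      ≤ gaussValue v γ p * gaussValue v γ q := by
        gcongr; exact pow_natDegree_le_gaussValue hq
    _ ≤ gaussValue v γ (p * q) := gaussValue_mul_gaussValue_le p q
    _ ≤ γ ^ (p * q).natDegree := hpq
    _ = γ ^ p.natDegree * γ ^ q.natDegree := by rw [hdeg, pow_add]

theorem SpectralValueLE.of_mul_left (hp : p.Monic) (hq : q.Monic)
    (hpq : SpectralValueLE v γ (p * q)) : SpectralValueLE v γ p := by
  rcases eq_or_ne γ 0 with rfl | hγ
  · exact hpq.zero_of_mul_left hp hq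
  · exact hpq.of_mul_left_of_ne_zero hγ hq (hp.natDegree_mul hq)

theorem SpectralValueLE.of_mul_right (hp : p.Monic) (hq : q.Monic)
    (hpq : SpectralValueLE v γ (p * q)) : SpectralValueLE v γ q :=
  SpectralValueLE.of_mul_left hq hp (mul_comm p q ▸ hpq)

end Valuation

theorem spectral_value_mul_general {A Γ₀ : Type*} [CommRing A] [LinearOrderedCommGroupWithZero Γ₀]
    (ν : A → Γ₀)
    (hν0 : ν 0 = 0) (hν1 : ν 1 = 1)
    (hνsub : ∀ x y : A, ν (x - y) ≤ max (ν x) (ν y))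
    (hνmul : ∀ x y : A, ν (x * y) ≤ ν x * ν y)
    (γ : Γ₀) (p q : Polynomial A) (hp : p.Monic) (hq : q.Monic) :
    (SpectralValueLE ν γ p → SpectralValueLE ν γ q → SpectralValueLE ν γ (p * q)) ∧
    ((∀ x y : A, ν (x * y) = ν x * ν y) →
      SpectralValueLE ν γ (p * q) →
      SpectralValueLE ν γ p ∧ SpectralValueLE ν γ q) := by
  have hνadd : IsNonarchimedean ν :=
    isNonarchimedean_of_map_sub_le_max (fun x ↦ hν0 ▸ zero_le) hνsub
  refine ⟨SpectralValueLE.mul hν0 hνadd hνmul (hp.natDegree_mul hq), fun hνmul_eq hpq ↦ ?_⟩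
  let v : Valuation A Γ₀ :=
    { toFun := ν
      map_zero' := hν0
      map_one' := hν1
      map_mul' := hνmul_eq
      map_add_le_max' := hνadd }
  have hpq_v : SpectralValueLE v γ (p * q) := hpq
  exact ⟨hpq_v.of_mul_left hp hq, hpq_v.of_mul_right hp hq⟩

/-- Lemma 1.3 (lem_specter): for a power-multiplicative seminorm, `σ(pq) ≤ max (σ p) (σ q)`
for monic `p`, `q`; if the seminorm is a valuation, this inequality is an equality. -/
theorem spectral_value_mul {A Γ₀ : Type*} [CommRing A] [LinearOrderedCommGroupWithZero Γ₀]
    (ν : A → Γ₀)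
    (hν0 : ν 0 = 0) (hν1 : ν 1 = 1)
    (hνsub : ∀ x y : A, ν (x - y) ≤ max (ν x) (ν y))
    (hνmul : ∀ x y : A, ν (x * y) ≤ ν x * ν y)
    (hνpow : ∀ (x : A) (n : ℕ), ν (x ^ n) = ν x ^ n)
    (γ : Γ₀) (p q : Polynomial A) (hp : p.Monic) (hq : q.Monic) :
    (SpectralValueLE ν γ p → SpectralValueLE ν γ q → SpectralValueLE ν γ (p * q)) ∧
    ((∀ x y : A, ν (x * y) = ν x * ν y) →
      SpectralValueLE ν γ (p * q) →
      SpectralValueLE ν γ p ∧ SpectralValueLE ν γ q) :=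
  spectral_value_mul_general ν hν0 hν1 hνsub hνmul γ p q hp hq
end

section
/- Let Γ₀ be a divisible linearly ordered commutative group with zero (for every γ ∈ Γ₀ and every integer n ≥ 1 there exists a — necessarily unique — δ ∈ Γ₀ with δⁿ = γ; write γ^{1/n} for it). Let A be an integrally closed (normal) domain equipped with a power-multiplicative Γ₀-valued seminorm |·|, and let A → B be an injective ring homomorphism with B integral over A and B torsion-free as an A-module. For b ∈ B let μ_b = Tⁿ + a₁Tⁿ⁻¹ + ⋯ + aₙ be its minimal polynomial over the fraction field of A (its coefficients lie in A since A is integrally closed), and define the spectral seminorm |b|_sp := max_{1 ≤ i ≤ n} |a_i|^{1/i}. Then (B, |·|_sp) is a power-multiplicatively seminormed ring: |0|_sp = 0, |1|_sp = 1, |x − y|_sp ≤ max(|x|_sp, |y|_sp), |x·y|_sp ≤ |x|_sp·|y|_sp, and |xⁿ|_sp = |x|_sp ⁿ for all x, y ∈ B and n ∈ ℕ. -/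
noncomputable instance spectralOrderBot {Γ₀ : Type*} [LinearOrderedCommMonoidWithZero Γ₀] :
    OrderBot Γ₀ where
  bot := 0
  bot_le _ := zero_le'

/-- The spectral seminorm of `b ∈ B` relative to a seminorm `ν` on `A` and a choice
`root` of `n`-th roots in `Γ₀` : if the minimal polynomial of `b` over `A` is
`Tⁿ + a₁Tⁿ⁻¹ + ⋯ + aₙ` (so `aᵢ = coeff (n - i)`), then
`|b|_sp = max_{1 ≤ i ≤ n} ν(aᵢ)^{1/i} = max_{0 ≤ k < n} root (ν (coeff k)) (n - k)`. -/
noncomputable def spectralSemiNorm {A B Γ₀ : Type*} [CommRing A] [CommRing B] [Algebra A B]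
    [LinearOrderedCommGroupWithZero Γ₀]
    (ν : A → Γ₀) (root : Γ₀ → ℕ → Γ₀) (b : B) : Γ₀ :=
  (Finset.range (minpoly A b).natDegree).sup fun k =>
    root (ν ((minpoly A b).coeff k)) ((minpoly A b).natDegree - k)

/-!
Call `x` *bounded integral at `c`* if it is a root of some monic `Tⁿ + a₁ Tⁿ⁻¹ + ⋯ + aₙ` with
`ν aᵢ ≤ cⁱ`. This says that `x · t` is integral over the Rees algebra `⨁ᵢ {a | ν a ≤ cⁱ} tⁱ`, and
since integral elements form a ring, bounded integrality is preserved by differences and products.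

For `b ∈ B` it remains to see that bounded integrality at `c` can be tested on the minimal
polynomial, i.e. that it means `|b|_sp ≤ c`. Since `A` is integrally closed and `B` is
torsion-free, the minimal polynomial divides any witness, so its roots in an algebraic closure are
bounded integral at `c` as well. Hence so are, at `cⁱ`, its coefficients `aᵢ`, being up to sign
the elementary symmetric functions of the roots. As `ν` is power-multiplicative, this forces
`ν aᵢ ≤ cⁱ`: in an equation of bounded integrality for `a ∈ A`, the leading term would dominate if
`ν a` exceeded the bound.
-/

open Polynomial
open scoped nonZeroDivisors

/-- Submultiplicative nonarchimedean seminorms with values in an ordered monoid with zero;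
power-multiplicativity is a separate condition. -/
structure IsUltrametricSeminorm {A Γ₀ : Type*} [CommRing A] [LinearOrderedCommMonoidWithZero Γ₀]
    (ν : A → Γ₀) : Prop where
  map_zero : ν 0 = 0
  map_one : ν 1 = 1
  map_sub_le_max : ∀ x y, ν (x - y) ≤ max (ν x) (ν y)
  map_mul_le : ∀ x y, ν (x * y) ≤ ν x * ν y

/-- The polynomial `P = Tⁿ + a₁ Tⁿ⁻¹ + ⋯ + aₙ` satisfies `ν aᵢ ≤ cⁱ` for `1 ≤ i ≤ n`; for monic `P`
this expresses that `max ν(aᵢ)^{1/i} ≤ c` without extracting roots. -/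
def HasCoeffBound {A Γ₀ : Type*} [CommRing A] [LinearOrderedCommMonoidWithZero Γ₀]
    (ν : A → Γ₀) (c : Γ₀) (P : A[X]) : Prop :=
  ∀ k < P.natDegree, ν (P.coeff k) ≤ c ^ (P.natDegree - k)

/-- Integrality of `x` over `A` with control on the size of the equation: `x` is a root of a monic
polynomial over `A` whose coefficients are bounded as in `HasCoeffBound`. -/
def IsBoundedIntegral {A S Γ₀ : Type*} [CommRing A] [CommRing S] [Algebra A S]
    [LinearOrderedCommMonoidWithZero Γ₀] (ν : A → Γ₀) (c : Γ₀) (x : S) : Prop :=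
  ∃ P : A[X], P.Monic ∧ HasCoeffBound ν c P ∧ aeval x P = 0

section Seminorm

variable {A Γ₀ : Type*} [CommRing A] [LinearOrderedCommMonoidWithZero Γ₀] {ν : A → Γ₀}

namespace IsUltrametricSeminorm

theorem map_neg (hν : IsUltrametricSeminorm ν) (x : A) : ν (-x) = ν x := by
  have map_neg_le (y : A) : ν (-y) ≤ ν y := by
    simpa [hν.map_zero] using hν.map_sub_le_max 0 y
  exact (map_neg_le x).antisymm (by simpa using map_neg_le (-x))

theorem map_add_le_max (hν : IsUltrametricSeminorm ν) (x y : A) : ν (x + y) ≤ max (ν x) (ν y) := by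
  simpa [hν.map_neg] using hν.map_sub_le_max x (-y)

theorem map_sum_le (hν : IsUltrametricSeminorm ν) {ι : Type*} {s : Finset ι} {f : ι → A} {c : Γ₀}
    (hf : ∀ i ∈ s, ν (f i) ≤ c) : ν (∑ i ∈ s, f i) ≤ c :=
  Finset.sum_induction f (ν · ≤ c) (fun x y hx hy ↦ (hν.map_add_le_max x y).trans (max_le hx hy))
    (hν.map_zero.trans_le zero_le) hf

theorem map_sum_lt (hν : IsUltrametricSeminorm ν) {ι : Type*} {s : Finset ι} {f : ι → A} {c : Γ₀}
    (hc : 0 < c) (hf : ∀ i ∈ s, ν (f i) < c) : ν (∑ i ∈ s, f i) < c :=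
  Finset.sum_induction f (ν · < c) (fun x y hx hy ↦ (hν.map_add_le_max x y).trans_lt (max_lt hx hy))
    (hν.map_zero.trans_lt hc) hf

end IsUltrametricSeminorm

end Seminorm

section ReesSubring

variable {A S Γ₀ M : Type*} [CommRing A] [CommRing S] [Algebra A S]
  [LinearOrderedCommMonoidWithZero Γ₀] {ν : A → Γ₀}

theorem IsUltrametricSeminorm.map_coeff_single_le (hν : IsUltrametricSeminorm ν) {w : M → Γ₀}
    {m : M} {a : A} (ha : ν a ≤ w m) (m' : M) :
    ν ((MonoidAlgebra.single m a).coeff m') ≤ w m' := by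
  classical
  rw [MonoidAlgebra.coeff_single, Finsupp.single_apply]
  split_ifs with hm
  · rwa [← hm]
  · exact hν.map_zero.trans_le zero_le

/-- The Rees algebra of the filtration `{a | ν a ≤ γ}` of `A`, graded by a monoid `M` with weights
`w : M →* Γ₀`: it consists of the `∑ aₘ·m` in `A[M]` with `ν aₘ ≤ w m`. -/
def reesSubring [CommMonoid M] (hν : IsUltrametricSeminorm ν) (w : M →* Γ₀) :
    Subring (MonoidAlgebra A M) where
  carrier := {f | ∀ m, ν (f.coeff m) ≤ w m}
  zero_mem' _ := hν.map_zero.trans_le zero_le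
  one_mem' := hν.map_coeff_single_le (by rw [hν.map_one, map_one])
  add_mem' hf hg m := (hν.map_add_le_max _ _).trans (max_le (hf m) (hg m))
  neg_mem' hf m := (hν.map_neg _).trans_le (hf m)
  mul_mem' {f g} hf hg m := by
    classical
    rw [MonoidAlgebra.coeff_mul]
    refine hν.map_sum_le fun m₁ _ ↦ hν.map_sum_le fun m₂ _ ↦ ?_
    dsimp only
    split_ifs with hm
    · rw [← hm, map_mul]
      exact (hν.map_mul_le _ _).trans (mul_le_mul' (hf m₁) (hg m₂))
    · exact hν.map_zero.trans_le zero_le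

open scoped AlgebraMonoidAlgebra

theorem IsBoundedIntegral.isIntegral_single [CommMonoid M] (hν : IsUltrametricSeminorm ν)
    (w : M →* Γ₀) {m : M} {x : S} (hx : IsBoundedIntegral ν (w m) x) :
    IsIntegral (reesSubring hν w) (MonoidAlgebra.single m x) := by
  obtain ⟨P, hP, hbound, hPx⟩ := hx
  let P' : (MonoidAlgebra A M)[X] := P.map (algebraMap A (MonoidAlgebra A M))
  let Q : (MonoidAlgebra A M)[X] := P'.scaleRoots (.single m 1)
  have hQ : Q.Monic := (monic_scaleRoots_iff _).2 (hP.map _)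
  have hQcoeff : (Q.coeffs : Set (MonoidAlgebra A M)) ⊆ reesSubring hν w := by
    intro q hq
    obtain ⟨k, -, rfl⟩ := mem_coeffs_iff.1 hq
    have hdeg : P'.natDegree = P.natDegree :=
      natDegree_map_eq_of_injective (FaithfulSMul.algebraMap_injective _ _) P
    have hcoeff : Q.coeff k = .single (m ^ (P.natDegree - k)) (P.coeff k) := by
      simp [Q, hdeg, P', MonoidAlgebra.single_pow, MonoidAlgebra.single_mul_single]
    rw [hcoeff]
    refine hν.map_coeff_single_le ?_
    rw [map_pow]
    rcases lt_trichotomy k P.natDegree with hk | rfl | hk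
    · exact hbound k hk
    · simp [hP, hν.map_one]
    · simp [coeff_eq_zero_of_natDegree_lt hk, hν.map_zero]
  have hQx : aeval (MonoidAlgebra.single m x) Q = 0 := by
    have hsingle : MonoidAlgebra.single m x = algebraMap (MonoidAlgebra A M) (MonoidAlgebra S M)
      (.single m 1) * algebraMap S _ x := by simp
    rw [hsingle]
    apply scaleRoots_aeval_eq_zero
    rw [aeval_map_algebraMap, aeval_algebraMap_apply, hPx, map_zero]
  refine ⟨Q.toSubring _ hQcoeff, (monic_toSubring _ _ _).2 hQ, ?_⟩
  change aeval _ _ = 0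
  rw [← aeval_map_algebraMap (MonoidAlgebra A M)]
  exact (congrArg _ (map_toSubring _ _ _)).trans hQx

theorem IsBoundedIntegral.of_sum_smul_pow_eq_zero {n : ℕ} {a : ℕ → A} {c : Γ₀} {x : S}
    (ha : a n = 1) (hle : ∀ k < n, ν (a k) ≤ c ^ (n - k))
    (hsum : ∑ k ∈ Finset.range (n + 1), a k • x ^ k = 0) : IsBoundedIntegral ν c x := by
  rcases subsingleton_or_nontrivial A with _ | _
  · have : Subsingleton S := Module.subsingleton A S
    exact ⟨1, monic_one, by simp [HasCoeffBound], Subsingleton.elim _ _⟩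
  let r : A[X] := ∑ k : Fin n, C (a k) * X ^ (k : ℕ)
  have hr : r.degree < n := degree_sum_fin_lt fun k : Fin n ↦ a k
  have hdeg : (X ^ n + r).natDegree = n := natDegree_eq_of_degree_eq_some <| by
    rw [degree_add_eq_left_of_degree_lt (by rwa [degree_X_pow]), degree_X_pow]
  refine ⟨X ^ n + r, monic_X_pow_add hr, fun k hk ↦ ?_, ?_⟩
  · rw [hdeg] at hk ⊢
    have hcoeff : (X ^ n + r).coeff k = a k := by
      simp [r, coeff_X_pow, hk.ne, hk,
        Fin.sum_univ_eq_sum_range (fun j ↦ if k = j then a j else 0)]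
    exact hcoeff ▸ hle k hk
  · rw [Finset.sum_range_succ, ha, one_smul, Finset.sum_range, add_comm] at hsum
    simpa [r, Algebra.smul_def] using hsum

theorem IsBoundedIntegral.of_isIntegral_single [CancelCommMonoid M] (hν : IsUltrametricSeminorm ν)
    (w : M →* Γ₀) {m : M} {x : S}
    (hx : IsIntegral (reesSubring hν w) (MonoidAlgebra.single m x)) :
    IsBoundedIntegral ν (w m) x := by
  obtain ⟨Q, hQ, hQx⟩ := hx
  let n := Q.natDegree
  refine .of_sum_smul_pow_eq_zero (n := n)
    (a := fun k ↦ (Q.coeff k : MonoidAlgebra A M).coeff (m ^ (n - k))) ?_ (fun k _ ↦ ?_) ?_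
  · simp [n, hQ, MonoidAlgebra.one_def]
  · rw [← map_pow]
    exact (Q.coeff k).2 _
  · have hcoeff (k : ℕ) (hk : k ∈ Finset.range (n + 1)) :
        (algebraMap (reesSubring hν w) (MonoidAlgebra S M) (Q.coeff k) *
          .single m x ^ k).coeff (m ^ n) =
        (Q.coeff k : MonoidAlgebra A M).coeff (m ^ (n - k)) • x ^ k := by
      have hmul : m ^ n = m ^ (n - k) * m ^ k := by
        rw [← pow_add, Nat.sub_add_cancel (Finset.mem_range_succ_iff.1 hk)]
      rw [MonoidAlgebra.single_pow, hmul, Algebra.smul_def,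
        MonoidAlgebra.coeff_mul_single_eq_coeff_mul (m ^ (n - k)) fun _ _ ↦ mul_left_inj _]
      exact congrArg (· * x ^ k) (MonoidAlgebra.coeff_mapRingHom (algebraMap A S) _ _)
    rw [← Finset.sum_congr rfl hcoeff]
    rw [eval₂_eq_sum_range] at hQx
    simpa using congrArg (fun f ↦ f.coeff (m ^ n)) hQx

end ReesSubring

section BoundedIntegral

open scoped AlgebraMonoidAlgebra

variable {A S Γ₀ : Type*} [CommRing A] [CommRing S] [Algebra A S]

section Monoid

variable [LinearOrderedCommMonoidWithZero Γ₀] {ν : A → Γ₀} {c d : Γ₀} {x y : S}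

namespace IsBoundedIntegral

theorem algebraMap_of_le (hν : IsUltrametricSeminorm ν) {a : A} (ha : ν a ≤ c) :
    IsBoundedIntegral ν c (algebraMap A S a) := by
  refine ⟨X - C a, monic_X_sub_C a, fun k hk ↦ ?_, by simp⟩
  have hdeg : (X - C a).natDegree = 1 :=
    (natDegree_X_sub_C_le a).antisymm (Nat.one_le_of_lt hk)
  rw [hdeg] at hk ⊢
  obtain rfl := Nat.lt_one_iff.1 hk
  simpa [hν.map_neg] using ha

theorem zero (hν : IsUltrametricSeminorm ν) (c : Γ₀) : IsBoundedIntegral ν c (0 : S) := by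
  simpa using algebraMap_of_le (S := S) hν (hν.map_zero.trans_le zero_le)

theorem one (hν : IsUltrametricSeminorm ν) : IsBoundedIntegral ν 1 (1 : S) := by
  simpa using algebraMap_of_le (S := S) hν hν.map_one.le

theorem sub (hν : IsUltrametricSeminorm ν) (hx : IsBoundedIntegral ν c x)
    (hy : IsBoundedIntegral ν c y) : IsBoundedIntegral ν c (x - y) := by
  let w : Multiplicative ℕ →* Γ₀ := powersHom Γ₀ c
  have hw : w (.ofAdd 1) = c := by simp [w]
  rw [← hw] at hx hy ⊢
  apply of_isIntegral_single hν
  rw [MonoidAlgebra.single_sub]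
  exact (hx.isIntegral_single hν w).sub (hy.isIntegral_single hν w)

theorem mul (hν : IsUltrametricSeminorm ν) (hx : IsBoundedIntegral ν c x)
    (hy : IsBoundedIntegral ν d y) : IsBoundedIntegral ν (c * d) (x * y) := by
  let w : Multiplicative ℕ × Multiplicative ℕ →* Γ₀ := (powersHom Γ₀ c).coprod (powersHom Γ₀ d)
  have hwc : w (.ofAdd 1, 1) = c := by simp [w]
  have hwd : w (1, .ofAdd 1) = d := by simp [w]
  rw [← hwc] at hx
  rw [← hwd] at hy
  rw [← hwc, ← hwd, ← map_mul]
  apply of_isIntegral_single hν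
  rw [← MonoidAlgebra.single_mul_single]
  exact (hx.isIntegral_single hν w).mul (hy.isIntegral_single hν w)

theorem neg (hν : IsUltrametricSeminorm ν) (hx : IsBoundedIntegral ν c x) :
    IsBoundedIntegral ν c (-x) := by
  simpa using (zero hν c).sub hν hx

theorem add (hν : IsUltrametricSeminorm ν) (hx : IsBoundedIntegral ν c x)
    (hy : IsBoundedIntegral ν c y) : IsBoundedIntegral ν c (x + y) := by
  simpa using hx.sub hν (hy.neg hν)

theorem pow (hν : IsUltrametricSeminorm ν) (hx : IsBoundedIntegral ν c x) (n : ℕ) :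
    IsBoundedIntegral ν (c ^ n) (x ^ n) := by
  induction n with
  | zero => simpa using one hν
  | succ n ih => simpa only [pow_succ] using ih.mul hν hx

theorem of_pow (hν : IsUltrametricSeminorm ν) {n : ℕ} (hn : 0 < n)
    (hx : IsBoundedIntegral ν (c ^ n) (x ^ n)) : IsBoundedIntegral ν c x := by
  obtain ⟨P, hP, hbound, hPx⟩ := hx
  refine ⟨expand A n P, (monic_expand_iff hn).2 hP, fun k hk ↦ ?_, by rwa [expand_aeval]⟩
  rw [natDegree_expand] at hk ⊢
  rw [coeff_expand hn]
  split_ifs with hdvd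
  · obtain ⟨j, rfl⟩ := hdvd
    rw [Nat.mul_div_cancel_left j hn, mul_comm _ n, ← Nat.mul_sub, pow_mul]
    exact hbound j (by nlinarith)
  · exact hν.map_zero.trans_le zero_le

theorem multiset_sum (hν : IsUltrametricSeminorm ν) {s : Multiset S}
    (hs : ∀ x ∈ s, IsBoundedIntegral ν c x) : IsBoundedIntegral ν c s.sum :=
  Multiset.sum_induction _ s (fun _ _ hx hy ↦ hx.add hν hy) (zero hν c) hs

theorem multiset_prod (hν : IsUltrametricSeminorm ν) {s : Multiset S}
    (hs : ∀ x ∈ s, IsBoundedIntegral ν c x) : IsBoundedIntegral ν (c ^ s.card) s.prod := by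
  induction s using Multiset.induction_on with
  | empty => simpa using one hν
  | cons x s ih =>
    obtain ⟨hx, hs⟩ := Multiset.forall_mem_cons.1 hs
    simpa only [Multiset.card_cons, Multiset.prod_cons, pow_succ'] using hx.mul hν (ih hs)

theorem esymm (hν : IsUltrametricSeminorm ν) {s : Multiset S}
    (hs : ∀ x ∈ s, IsBoundedIntegral ν c x) (i : ℕ) :
    IsBoundedIntegral ν (c ^ i) (s.esymm i) := by
  refine multiset_sum hν fun p hp ↦ ?_
  obtain ⟨t, ht, rfl⟩ := Multiset.mem_map.1 hp
  obtain ⟨hts, rfl⟩ := Multiset.mem_powersetCard.1 ht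
  exact multiset_prod hν fun x hx ↦ hs x (Multiset.subset_of_le hts hx)

end IsBoundedIntegral

end Monoid

section Group

variable [LinearOrderedCommGroupWithZero Γ₀] {ν : A → Γ₀} {c : Γ₀}

theorem IsBoundedIntegral.le_of_algebraMap (hν : IsUltrametricSeminorm ν)
    (hpow : ∀ (x : A) (n : ℕ), ν (x ^ n) = ν x ^ n)
    (hAS : Function.Injective (algebraMap A S)) {a : A}
    (ha : IsBoundedIntegral ν c (algebraMap A S a)) : ν a ≤ c := by
  obtain ⟨P, hP, hbound, hPa⟩ := ha
  by_contra! hlt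
  have hpos : 0 < ν a := zero_le.trans_lt hlt
  let n := P.natDegree
  have hterm (k : ℕ) (hk : k ∈ Finset.range n) : ν (P.coeff k * a ^ k) < ν a ^ n := by
    have hk : k < n := Finset.mem_range.1 hk
    calc
      ν (P.coeff k * a ^ k) ≤ ν (P.coeff k) * ν a ^ k := hpow a k ▸ hν.map_mul_le _ _
      _ ≤ c ^ (n - k) * ν a ^ k := by gcongr; exact hbound k hk
      _ < ν a ^ (n - k) * ν a ^ k := by
        have hne : n - k ≠ 0 := (Nat.sub_pos_of_lt hk).ne'
        exact mul_lt_mul_of_pos_right (pow_lt_pow_left₀ hlt zero_le hne) (pow_pos hpos k)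
      _ = ν a ^ n := by rw [← pow_add, Nat.sub_add_cancel hk.le]
  have heval : a ^ n = -∑ k ∈ Finset.range n, P.coeff k * a ^ k := by
    rw [eq_neg_iff_add_eq_zero, add_comm]
    have hroot : P.eval a = 0 :=
      hAS (by rw [map_zero, ← hPa, aeval_algebraMap_apply, coe_aeval_eq_eval])
    rwa [eval_eq_sum_range, Finset.sum_range_succ, hP.coeff_natDegree, one_mul] at hroot
  have hlt_self : ν (a ^ n) < ν a ^ n := by
    rw [heval, hν.map_neg]
    exact hν.map_sum_lt (pow_pos hpos n) hterm
  exact hlt_self.ne (hpow a n)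

theorem HasCoeffBound.of_roots [IsDomain S] (hν : IsUltrametricSeminorm ν)
    (hpow : ∀ (x : A) (n : ℕ), ν (x ^ n) = ν x ^ n)
    (hAS : Function.Injective (algebraMap A S)) {P : A[X]} (hP : P.Monic)
    (hsplits : (P.map (algebraMap A S)).Splits)
    (hroots : ∀ y ∈ P.aroots S, IsBoundedIntegral ν c y) : HasCoeffBound ν c P := by
  intro k hk
  apply IsBoundedIntegral.le_of_algebraMap hν hpow hAS
  have hcard : (P.map (algebraMap A S)).roots.card = (P.map (algebraMap A S)).natDegree :=
    hsplits.natDegree_eq_card_roots.symm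
  have hesymm := IsBoundedIntegral.esymm hν hroots (P.natDegree - k)
  rw [← coeff_map, coeff_eq_esymm_roots_of_card hcard (by rw [hP.natDegree_map]; exact hk.le),
    (hP.map _).leadingCoeff, one_mul, hP.natDegree_map]
  rcases neg_one_pow_eq_or S (P.natDegree - k) with hsign | hsign
  · simpa only [hsign, one_mul] using hesymm
  · simpa only [hsign, neg_one_mul] using hesymm.neg hν

end Group

end BoundedIntegral

section Minpoly

theorem algebraMapSubmonoid_nonZeroDivisors_le (A B : Type*) [CommRing A] [CommRing B] [Algebra A B]
    [Module.IsTorsionFree A B] : Algebra.algebraMapSubmonoid B A⁰ ≤ B⁰ := by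
  rintro _ ⟨a, ha, rfl⟩
  refine mem_nonZeroDivisors_iff_right.2 fun x hx ↦ ?_
  have hreg : IsSMulRegular B a := (isRegular_iff_mem_nonZeroDivisors.2 ha).isSMulRegular
  exact hreg (by simpa [Algebra.smul_def, mul_comm] using hx)

variable {A B : Type*} [CommRing A] [IsIntegrallyClosed A] [CommRing B] [Algebra A B]

theorem minpoly_fractionField_eq_map_of_injective (K L : Type*) [Field K] [Algebra A K]
    [IsFractionRing A K] [CommRing L] [Algebra A L] [Algebra B L] [Algebra K L]
    [IsScalarTower A K L] [IsScalarTower A B L] (hBL : Function.Injective (algebraMap B L))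
    {b : B} (hb : IsIntegral A b) :
    minpoly K (algebraMap B L b) = (minpoly A b).map (algebraMap A K) := by
  have hmonic : (minpoly K (algebraMap B L b)).Monic :=
    minpoly.monic (hb.map (IsScalarTower.toAlgHom A B L)).tower_top
  have hdvd : minpoly K (algebraMap B L b) ∣ (minpoly A b).map (algebraMap A K) :=
    minpoly.dvd _ _ (by rw [aeval_map_algebraMap, aeval_algebraMap_apply, minpoly.aeval, map_zero])
  obtain ⟨D, hD⟩ := IsIntegrallyClosed.eq_map_mul_C_of_dvd K (minpoly.monic hb) hdvd
  rw [hmonic.leadingCoeff, C_1, mul_one] at hD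
  have hDmonic : D.Monic :=
    monic_of_injective (IsFractionRing.injective A K) (hD ▸ hmonic)
  have hDb : aeval b D = 0 := hBL <| by
    rw [← aeval_algebraMap_apply, ← aeval_map_algebraMap K, hD, minpoly.aeval, map_zero]
  have hDdvd : D ∣ minpoly A b :=
    (map_dvd_map _ (IsFractionRing.injective A K) hDmonic).1 (hD ▸ hdvd)
  rw [← hD, eq_of_monic_of_dvd_of_natDegree_le hDmonic (minpoly.monic hb) hDdvd
    (natDegree_le_natDegree (minpoly.min A b hDmonic hDb))]

theorem minpoly_dvd_of_isTorsionFree [IsDomain A] [Module.IsTorsionFree A B] {b : B}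
    (hb : IsIntegral A b) {Q : A[X]} (hQ : aeval b Q = 0) : minpoly A b ∣ Q := by
  let K := FractionRing A
  let L := Localization (Algebra.algebraMapSubmonoid B A⁰)
  have hBL : Function.Injective (algebraMap B L) :=
    IsLocalization.injective L (algebraMapSubmonoid_nonZeroDivisors_le A B)
  rw [← map_dvd_map (algebraMap A K) (IsFractionRing.injective A K) (minpoly.monic hb),
    ← minpoly_fractionField_eq_map_of_injective K L hBL hb]
  exact minpoly.dvd _ _ (by rw [aeval_map_algebraMap, aeval_algebraMap_apply, hQ, map_zero])

end Minpoly

section Spectral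

variable {A B Γ₀ : Type*} [CommRing A] [CommRing B] [Algebra A B]
  [LinearOrderedCommGroupWithZero Γ₀] {ν : A → Γ₀} {root : Γ₀ → ℕ → Γ₀} {b : B} {c : Γ₀}

theorem spectralSemiNorm_le_iff_hasCoeffBound
    (hroot : ∀ (γ : Γ₀) (n : ℕ), 1 ≤ n → root γ n ^ n = γ) :
    spectralSemiNorm ν root b ≤ c ↔ HasCoeffBound ν c (minpoly A b) := by
  rw [spectralSemiNorm, Finset.sup_le_iff]
  refine forall_congr' fun k ↦ ?_
  rw [Finset.mem_range]
  refine imp_congr_right fun hk ↦ ?_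
  have hpos : 0 < (minpoly A b).natDegree - k := Nat.sub_pos_of_lt hk
  rw [← pow_le_pow_iff_left₀ zero_le zero_le hpos.ne', hroot _ _ hpos]

variable [IsDomain A] [IsIntegrallyClosed A] [Module.IsTorsionFree A B]

theorem hasCoeffBound_minpoly_iff (hν : IsUltrametricSeminorm ν)
    (hpow : ∀ (x : A) (n : ℕ), ν (x ^ n) = ν x ^ n) (hb : IsIntegral A b) :
    HasCoeffBound ν c (minpoly A b) ↔ IsBoundedIntegral ν c b := by
  refine ⟨fun h ↦ ⟨minpoly A b, minpoly.monic hb, h, minpoly.aeval A b⟩, ?_⟩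
  rintro ⟨Q, hQ, hbound, hQb⟩
  let K := FractionRing A
  let Ω := AlgebraicClosure K
  have hAΩ : Function.Injective (algebraMap A Ω) := by
    rw [IsScalarTower.algebraMap_eq A K Ω]
    exact (algebraMap K Ω).injective.comp (IsFractionRing.injective A K)
  refine .of_roots hν hpow hAΩ (minpoly.monic hb) (IsAlgClosed.splits _) fun y hy ↦
    ⟨Q, hQ, hbound, ?_⟩
  have hdvd : minpoly A b ∣ Q := minpoly_dvd_of_isTorsionFree hb hQb
  exact aeval_eq_zero_of_dvd_aeval_eq_zero hdvd (mem_aroots'.1 hy).2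

theorem spectralSemiNorm_le_iff (hν : IsUltrametricSeminorm ν)
    (hpow : ∀ (x : A) (n : ℕ), ν (x ^ n) = ν x ^ n)
    (hroot : ∀ (γ : Γ₀) (n : ℕ), 1 ≤ n → root γ n ^ n = γ) (hb : IsIntegral A b) :
    spectralSemiNorm ν root b ≤ c ↔ IsBoundedIntegral ν c b :=
  (spectralSemiNorm_le_iff_hasCoeffBound hroot).trans (hasCoeffBound_minpoly_iff hν hpow hb)

theorem spectralSemiNorm_algebraMap (hν : IsUltrametricSeminorm ν)
    (hpow : ∀ (x : A) (n : ℕ), ν (x ^ n) = ν x ^ n)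
    (hroot : ∀ (γ : Γ₀) (n : ℕ), 1 ≤ n → root γ n ^ n = γ)
    (hAB : Function.Injective (algebraMap A B)) (a : A) :
    spectralSemiNorm ν root (algebraMap A B a) = ν a :=
  eq_of_forall_ge_iff fun _ ↦ (spectralSemiNorm_le_iff hν hpow hroot isIntegral_algebraMap).trans
    ⟨fun h ↦ h.le_of_algebraMap hν hpow hAB, fun h ↦ .algebraMap_of_le hν h⟩

theorem spectralSemiNorm_pow (hν : IsUltrametricSeminorm ν)
    (hpow : ∀ (x : A) (n : ℕ), ν (x ^ n) = ν x ^ n)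
    (hroot : ∀ (γ : Γ₀) (n : ℕ), 1 ≤ n → root γ n ^ n = γ) (hb : IsIntegral A b) {n : ℕ}
    (hn : 0 < n) : spectralSemiNorm ν root (b ^ n) = spectralSemiNorm ν root b ^ n := by
  have le_iff {x : B} (hx : IsIntegral A x) {c : Γ₀} :
      spectralSemiNorm ν root x ≤ c ↔ IsBoundedIntegral ν c x :=
    spectralSemiNorm_le_iff hν hpow hroot hx
  apply le_antisymm
  · exact (le_iff (hb.pow n)).2 (((le_iff hb).1 le_rfl).pow hν n)
  · let d := root (spectralSemiNorm ν root (b ^ n)) n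
    have hd : d ^ n = spectralSemiNorm ν root (b ^ n) := hroot _ n hn
    have hbd : IsBoundedIntegral ν d b := .of_pow hν hn ((le_iff (hb.pow n)).1 hd.ge)
    exact (pow_le_pow_left₀ zero_le ((le_iff hb).2 hbd) n).trans_eq hd

end Spectral

/-- Proposition 1.5 (prop_spectral-norm): if `Γ₀` is divisible (witnessed by the root
function), `A` is an integrally closed domain with a power-multiplicative `Γ₀`-valued
seminorm, and `A → B` is injective with `B` integral and torsion-free over `A`, then
the spectral seminorm makes `B` a power-multiplicatively seminormed ring. -/
theorem spectralSemiNorm_is_powMul_seminorm {A B Γ₀ : Type*}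
    [CommRing A] [IsDomain A] [IsIntegrallyClosed A]
    [CommRing B] [Algebra A B] [Algebra.IsIntegral A B] [NoZeroSMulDivisors A B]
    [LinearOrderedCommGroupWithZero Γ₀]
    (hinj : Function.Injective (algebraMap A B))
    (ν : A → Γ₀)
    (hν0 : ν 0 = 0) (hν1 : ν 1 = 1)
    (hνsub : ∀ x y : A, ν (x - y) ≤ max (ν x) (ν y))
    (hνmul : ∀ x y : A, ν (x * y) ≤ ν x * ν y)
    (hνpow : ∀ (x : A) (n : ℕ), ν (x ^ n) = ν x ^ n)
    (root : Γ₀ → ℕ → Γ₀)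
    (hroot : ∀ (γ : Γ₀) (n : ℕ), 1 ≤ n → root γ n ^ n = γ) :
    spectralSemiNorm ν root (0 : B) = 0 ∧
    spectralSemiNorm ν root (1 : B) = 1 ∧
    (∀ x y : B, spectralSemiNorm ν root (x - y) ≤
      max (spectralSemiNorm ν root x) (spectralSemiNorm ν root y)) ∧
    (∀ x y : B, spectralSemiNorm ν root (x * y) ≤
      spectralSemiNorm ν root x * spectralSemiNorm ν root y) ∧
    (∀ (x : B) (n : ℕ), spectralSemiNorm ν root (x ^ n) = spectralSemiNorm ν root x ^ n) := by
  have hν : IsUltrametricSeminorm ν := ⟨hν0, hν1, hνsub, hνmul⟩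
  have : Module.IsTorsionFree A B := .of_smul_eq_zero fun _ _ ↦ smul_eq_zero.1
  have hB (b : B) : IsIntegral A b := Algebra.IsIntegral.isIntegral b
  have le_iff {b : B} {c : Γ₀} : spectralSemiNorm ν root b ≤ c ↔ IsBoundedIntegral ν c b :=
    spectralSemiNorm_le_iff hν hνpow hroot (hB b)
  have hsp_algebraMap (a : A) : spectralSemiNorm ν root (algebraMap A B a) = ν a :=
    spectralSemiNorm_algebraMap hν hνpow hroot hinj a
  have hsp_one : spectralSemiNorm ν root (1 : B) = 1 := by
    rw [← (algebraMap A B).map_one, hsp_algebraMap, hν1]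
  refine ⟨?_, hsp_one, fun x y ↦ ?_, fun x y ↦ ?_, fun x n ↦ ?_⟩
  · rw [← (algebraMap A B).map_zero, hsp_algebraMap, hν0]
  · exact le_iff.2 ((le_iff.1 (le_max_left _ _)).sub hν (le_iff.1 (le_max_right _ _)))
  · exact le_iff.2 ((le_iff.1 le_rfl).mul hν (le_iff.1 le_rfl))
  · rcases n.eq_zero_or_pos with rfl | hn
    · rw [pow_zero, pow_zero, hsp_one]
    · exact spectralSemiNorm_pow hν hνpow hroot (hB x) hn
end

section
/- Let Γ₀ be a divisible linearly ordered commutative group with zero, K a field, L an algebraic field extension of K, v a Γ₀-valued valuation on K, and w a Γ₀-valued valuation on L whose restriction to K equals v. Let A := {x ∈ K : v(x) ≤ 1} and B := {x ∈ L : w(x) ≤ 1} be the corresponding valuation rings, and assume that B is integral over A. Then for every nonzero b ∈ B, writing Tⁿ + a₁Tⁿ⁻¹ + ⋯ + aₙ for the minimal polynomial of b over K (whose coefficients automatically lie in A, since A is integrally closed and b is integral over A), one has w(b) = max_{1 ≤ i ≤ n} v(a_i)^{1/i}; that is, the spectral norm of the extension A ⊆ B coincides with the valuation w. -/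
/-!
The minimal polynomial `Tⁿ + a₁Tⁿ⁻¹ + ⋯ + aₙ` of `b` vanishes at `b`, so the ultrametric inequality
gives `w b ^ i ≤ v aᵢ` for some `i ≥ 1`. Conversely, if `b ≠ 0` then two terms of this vanishing sum
have the same nonzero value, so `w b ^ m = v c` for some `m > 0` and `c ∈ K`. Then `c⁻¹ b ^ m` has
value `1`, so it is integral over `A`, and so is `c⁻¹ r ^ m` for every conjugate `r` of `b`. If
`s ^ m = c⁻¹` in an algebraic closure, all `s r` are integral over `A`, hence so are their symmetric
functions `± sⁱ aᵢ`. The `m`-th powers of these lie in `K` and `A` is integrally closed,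
so `v aᵢ ^ m ≤ v c ^ i = (w b ^ i) ^ m`.
-/

open Polynomial

section Conjugates

variable {R K L M : Type*} [CommRing R] [Field K] [Algebra R K]

theorem isIntegral_aeval_of_aeval_minpoly_eq_zero [Ring L] [Algebra K L] [Algebra R L]
    [IsScalarTower R K L] [CommRing M] [Algebra K M] [Algebra R M] [IsScalarTower R K M]
    {b : L} {r : M} (hr : aeval r (minpoly K b) = 0) (f : K[X]) (hf : IsIntegral R (aeval b f)) :
    IsIntegral R (aeval r f) := by
  obtain ⟨q, hq, hqb⟩ := hf
  have hdvd : minpoly K b ∣ (q.map (algebraMap R K)).comp f :=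
    minpoly.dvd K b (by rwa [aeval_comp, aeval_map_algebraMap])
  refine ⟨q, hq, ?_⟩
  have hqr := aeval_eq_zero_of_dvd_aeval_eq_zero hdvd hr
  rwa [aeval_comp, aeval_map_algebraMap] at hqr

theorem isIntegral_coeff_pow_mul_of_isIntegral_roots [Field M] [IsAlgClosed M] [Algebra K M]
    [Algebra R M] [IsScalarTower R K M] {p : K[X]} (hp : p.Monic) {m : ℕ} (hm : 0 < m)
    {d : K} (hd : d ≠ 0)
    (hroots : ∀ r : M, aeval r p = 0 → IsIntegral R (d • r ^ m)) (k : ℕ) :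
    IsIntegral R (p.coeff k ^ m * d ^ (p.natDegree - k)) := by
  obtain ⟨s, hs⟩ := IsAlgClosed.exists_pow_nat_eq (algebraMap K M d) hm
  have hs0 : s ≠ 0 := by
    rintro rfl
    exact hd (by simpa [hm.ne'] using hs.symm)
  set P : M[X] := p.map (algebraMap K M)
  have hscaled : IsIntegral R ((P.scaleRoots s).coeff k) := by
    refine isIntegral_coeff_of_factors _ ?_ (IsAlgClosed.splits _) (fun x hx ↦ ?_) k
    · rw [leadingCoeff_scaleRoots, (hp.map _).leadingCoeff]
      exact isIntegral_one
    have hx' : x ∈ (P.scaleRoots s).roots :=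
      (mem_roots (scaleRoots_ne_zero (hp.map _).ne_zero s)).2 hx
    rw [roots_scaleRoots _ hs0.isUnit, Multiset.mem_map] at hx'
    obtain ⟨r, hr, rfl⟩ := hx'
    have hrp : aeval r p = 0 := by simpa [P] using isRoot_of_mem_roots hr
    exact .of_pow hm (by simpa only [mul_pow, hs, Algebra.smul_def] using hroots r hrp)
  rw [← isIntegral_algebraMap_iff (algebraMap K M).injective]
  convert hscaled.pow m using 1
  rw [coeff_scaleRoots, coeff_map, natDegree_map, mul_pow, pow_right_comm, hs, map_mul, map_pow,
    map_pow]

theorem isIntegral_minpoly_coeff_pow_mul [Ring L] [Algebra K L] [Algebra R L]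
    [IsScalarTower R K L] {b : L} {m : ℕ} (hm : 0 < m) {d : K} (hd : d ≠ 0)
    (h : IsIntegral R (d • b ^ m)) (k : ℕ) :
    IsIntegral R ((minpoly K b).coeff k ^ m * d ^ ((minpoly K b).natDegree - k)) := by
  have hb : IsIntegral K b :=
    .of_pow hm (by simpa only [inv_smul_smul₀ hd] using h.tower_top.smul d⁻¹)
  refine isIntegral_coeff_pow_mul_of_isIntegral_roots (M := AlgebraicClosure K)
    (minpoly.monic hb) hm hd (fun r hr ↦ ?_) k
  have hconj := isIntegral_aeval_of_aeval_minpoly_eq_zero hr (d • X ^ m)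
    (by rwa [map_smul, map_pow, aeval_X])
  rwa [map_smul, map_pow, aeval_X] at hconj

end Conjugates

section Ultrametric

variable {Γ₀ : Type*} [LinearOrderedCommGroupWithZero Γ₀]

theorem exists_ne_valuation_eq_of_sum_eq_zero {ι R : Type*} [Ring R] (w : Valuation R Γ₀)
    {s : Finset ι} {f : ι → R} (hsum : ∑ i ∈ s, f i = 0) (hf : ∃ i ∈ s, w (f i) ≠ 0) :
    ∃ i ∈ s, ∃ j ∈ s, i ≠ j ∧ w (f i) = w (f j) ∧ w (f j) ≠ 0 := by
  classical
  obtain ⟨i₀, hi₀, hfi₀⟩ := hf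
  obtain ⟨j, hj, hmax⟩ := s.exists_max_image (fun i ↦ w (f i)) ⟨i₀, hi₀⟩
  have hfj : w (f j) ≠ 0 := ((zero_lt_iff.2 hfi₀).trans_le (hmax i₀ hi₀)).ne'
  by_contra! hne
  have hlt : ∀ i ∈ s \ {j}, w (f i) < w (f j) := fun i hi ↦ by
    obtain ⟨his, hij⟩ : i ∈ s ∧ i ≠ j := by simpa using hi
    exact (hmax i his).lt_of_ne fun h ↦ hfj (hne i his j hj hij h)
  have hmap := w.map_sum_eq_of_lt hj hlt
  rw [hsum, map_zero] at hmap
  exact hfj hmap.symm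

theorem exists_valuation_pow_eq_of_isAlgebraic {K L : Type*} [Field K] [Ring L] [Algebra K L]
    (w : Valuation L Γ₀) {b : L} (hb : IsAlgebraic K b) :
    ∃ m > 0, ∃ c : K, w b ^ m = w (algebraMap K L c) := by
  obtain hwb | hwb := eq_or_ne (w b) 0
  · exact ⟨1, one_pos, 0, by simp [hwb]⟩
  obtain ⟨p, hp, hpb⟩ := hb
  let v := w.comap (algebraMap K L)
  have hterm (i : ℕ) : w (p.coeff i • b ^ i) = v (p.coeff i) * w b ^ i := by
    rw [Algebra.smul_def, map_mul, map_pow, Valuation.comap_apply]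
  rw [aeval_eq_sum_range] at hpb
  obtain ⟨i, -, j, -, hij, heq, hne⟩ := exists_ne_valuation_eq_of_sum_eq_zero w hpb
    ⟨p.natDegree, Finset.self_mem_range_succ _, by
      rw [hterm]
      exact mul_ne_zero (v.ne_zero_iff.2 (leadingCoeff_ne_zero.2 hp)) (pow_ne_zero _ hwb)⟩
  wlog hlt : i < j generalizing i j
  · exact this j i hij.symm heq.symm (heq ▸ hne) (hij.lt_or_gt.resolve_left hlt)
  rw [hterm] at hne
  rw [hterm, hterm] at heq
  refine ⟨j - i, Nat.sub_pos_of_lt hlt, p.coeff i / p.coeff j, ?_⟩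
  change w b ^ (j - i) = v (p.coeff i / p.coeff j)
  rw [map_div₀, eq_div_iff (left_ne_zero_of_mul hne)]
  apply mul_right_cancel₀ (pow_ne_zero i hwb)
  rw [heq, mul_right_comm, pow_sub_mul_pow _ hlt.le, mul_comm]

theorem exists_valuation_pow_le_valuation_coeff {S L : Type*} [CommRing S] [Ring L] [Algebra S L]
    (w : Valuation L Γ₀) {p : S[X]} (hp : p.Monic) {b : L} (hb : aeval b p = 0) :
    ∃ k < p.natDegree, w b ^ (p.natDegree - k) ≤ w (algebraMap S L (p.coeff k)) := by
  by_contra! hlt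
  have hne : w b ^ p.natDegree ≠ 0 := by
    obtain hn | hn := p.natDegree.eq_zero_or_pos
    · simp [hn]
    · exact (zero_le.trans_lt (hlt 0 hn)).ne'
  have hterm : ∀ k ∈ Finset.range p.natDegree, w (p.coeff k • b ^ k) < w b ^ p.natDegree := by
    intro k hk
    have hkn := Finset.mem_range.1 hk
    rw [← pow_sub_mul_pow _ hkn.le] at hne ⊢
    rw [Algebra.smul_def, map_mul, map_pow]
    exact mul_lt_mul_of_pos_right (hlt k hkn) (zero_lt_iff.2 (right_ne_zero_of_mul hne))
  have hsum := w.map_sum_lt hne hterm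
  rw [aeval_eq_sum_range, Finset.sum_range_succ, hp.coeff_natDegree, one_smul] at hb
  rw [eq_neg_of_add_eq_zero_left hb, Valuation.map_neg, map_pow] at hsum
  exact hsum.false

end Ultrametric

section IntegralValuationRing

variable {K L Γ₀ : Type*} [Field K] [LinearOrderedCommGroupWithZero Γ₀] {v : Valuation K Γ₀}

theorem isIntegral_integer_iff_exists_monic [Ring L] [Algebra K L] {x : L} :
    IsIntegral v.integer x ↔
      ∃ p : K[X], p.Monic ∧ (∀ i, v (p.coeff i) ≤ 1) ∧ aeval x p = 0 := by
  constructor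
  · rintro ⟨q, hq, hqx⟩
    refine ⟨q.map (algebraMap v.integer K), hq.map _, fun i ↦ ?_, ?_⟩
    · rw [coeff_map]
      exact (q.coeff i).2
    · rwa [aeval_map_algebraMap]
  · rintro ⟨p, hp, hcoeff, hpx⟩
    have hlifts : p ∈ lifts (algebraMap v.integer K) :=
      (lifts_iff_coeff_lifts _).2 fun i ↦ ⟨⟨p.coeff i, hcoeff i⟩, rfl⟩
    obtain ⟨q, rfl, -, hq⟩ := lifts_and_natDegree_eq_and_monic hlifts hp
    exact ⟨q, hq, by rwa [aeval_map_algebraMap] at hpx⟩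

variable [Field L] [Algebra K L] {w : Valuation L Γ₀}

theorem isIntegral_of_forall_isIntegral_integer (hint : ∀ x : L, w x ≤ 1 → IsIntegral v.integer x)
    (b : L) : IsIntegral K b := by
  obtain hb | hb := le_total (w b) 1
  · exact (hint b hb).tower_top
  · have hinv : IsIntegral K b⁻¹ := (hint b⁻¹ (by simpa using inv_le_one_of_one_le₀ hb)).tower_top
    simpa using hinv.inv

theorem valuation_minpoly_coeff_le_pow (hcomp : ∀ x : K, w (algebraMap K L x) = v x)
    (hint : ∀ x : L, w x ≤ 1 → IsIntegral v.integer x) (b : L) (k : ℕ) :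
    v ((minpoly K b).coeff k) ≤ w b ^ ((minpoly K b).natDegree - k) := by
  obtain rfl | hb := eq_or_ne b 0
  · obtain rfl | hk := eq_or_ne 1 k <;> simp [coeff_X, *]
  obtain ⟨m, hm, c, hc⟩ := exists_valuation_pow_eq_of_isAlgebraic w
    (isIntegral_of_forall_isIntegral_integer hint b).isAlgebraic
  rw [hcomp] at hc
  have hvc : v c ≠ 0 := hc ▸ pow_ne_zero m (w.ne_zero_iff.2 hb)
  have hunit : w (c⁻¹ • b ^ m) = 1 := by
    rw [Algebra.smul_def, map_mul, map_pow, hcomp, hc, map_inv₀, inv_mul_cancel₀ hvc]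
  have hle := (Valuation.integer.integers v).isIntegral_iff_v_le_one.1 <|
    isIntegral_minpoly_coeff_pow_mul hm (inv_ne_zero (v.ne_zero_iff.1 hvc)) (hint _ hunit.le) k
  rw [map_mul, map_pow, map_pow, map_inv₀, inv_pow, ← div_eq_mul_inv,
    div_le_one₀ (pow_pos (zero_lt_iff.2 hvc) _), ← hc, pow_right_comm] at hle
  exact (pow_le_pow_iff_left₀ zero_le zero_le hm.ne').1 hle

theorem spectralNorm_eq_valuation_general (hcomp : ∀ x : K, w (algebraMap K L x) = v x)
    {root : Γ₀ → ℕ → Γ₀} (hroot : ∀ (γ : Γ₀) (n : ℕ), 1 ≤ n → root γ n ^ n = γ)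
    (hint : ∀ x : L, w x ≤ 1 → IsIntegral v.integer x) (b : L) :
    w b = (Finset.range (minpoly K b).natDegree).sup fun k =>
      root (v ((minpoly K b).coeff k)) ((minpoly K b).natDegree - k) := by
  set n := (minpoly K b).natDegree
  refine le_antisymm ?_ (Finset.sup_le fun k hk ↦ ?_)
  · obtain ⟨k, hk, hle⟩ := exists_valuation_pow_le_valuation_coeff w
      (minpoly.monic (isIntegral_of_forall_isIntegral_integer hint b)) (minpoly.aeval K b)
    have hnk : 0 < n - k := Nat.sub_pos_of_lt hk
    rw [hcomp, ← hroot (v _) (n - k) hnk] at hle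
    exact ((pow_le_pow_iff_left₀ zero_le zero_le hnk.ne').1 hle).trans
      (Finset.le_sup (f := fun k ↦ root (v ((minpoly K b).coeff k)) (n - k))
        (Finset.mem_range.2 hk))
  · have hnk : 0 < n - k := Nat.sub_pos_of_lt (Finset.mem_range.1 hk)
    rw [← pow_le_pow_iff_left₀ zero_le zero_le hnk.ne', hroot _ _ hnk]
    exact valuation_minpoly_coeff_le_pow hcomp hint b k

end IntegralValuationRing

/-- Lemma 1.7(iii) (lem_nobigdeal): let `v`, `w` be valuations on `K ⊆ L` (an algebraic
extension of fields) with `w` extending `v`, with values in a divisible `Γ₀` (divisibility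
witnessed by the root function), and suppose the valuation ring `B = {x ∈ L : w x ≤ 1}`
is integral over `A = {x ∈ K : v x ≤ 1}`.  Then for every nonzero `b ∈ B`, writing
`Tⁿ + a₁Tⁿ⁻¹ + ⋯ + aₙ` for the minimal polynomial of `b` over `K`, one has
`w b = max_{1 ≤ i ≤ n} v(aᵢ)^{1/i}`: the spectral norm of the extension coincides with `w`. -/
theorem spectralNorm_eq_valuation {K L Γ₀ : Type*} [Field K] [Field L] [Algebra K L]
    [Algebra.IsAlgebraic K L] [LinearOrderedCommGroupWithZero Γ₀]
    (v : Valuation K Γ₀) (w : Valuation L Γ₀)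
    (hcomp : ∀ x : K, w (algebraMap K L x) = v x)
    (root : Γ₀ → ℕ → Γ₀)
    (hroot : ∀ (γ : Γ₀) (n : ℕ), 1 ≤ n → root γ n ^ n = γ)
    (hint : ∀ x : L, w x ≤ 1 →
      ∃ p : Polynomial K, p.Monic ∧ (∀ i : ℕ, v (p.coeff i) ≤ 1) ∧ Polynomial.aeval x p = 0) :
    ∀ b : L, b ≠ 0 → w b ≤ 1 →
      w b = (Finset.range (minpoly K b).natDegree).sup fun k =>
        root (v ((minpoly K b).coeff k)) ((minpoly K b).natDegree - k) := by
  exact fun b _ _ ↦ spectralNorm_eq_valuation_general hcomp hroot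
    (fun x hx ↦ isIntegral_integer_iff_exists_monic.2 (hint x hx)) b
end

section
/- Let R be a commutative ring, n and m positive integers, and t = (t_{ij})_{1 ≤ i,j ≤ n} an n×n array whose entries t_{ij} are m×m matrices over R that commute pairwise (t_{ij}·t_{kl} = t_{kl}·t_{ij} for all i, j, k, l). Let T be the (nm)×(nm) matrix over R obtained by assembling the blocks, i.e. T_{(i,a),(j,b)} := (t_{ij})_{ab}, and let D := Σ_{σ ∈ Sₙ} sign(σ) · t_{1σ(1)}·t_{2σ(2)}⋯t_{nσ(n)} ∈ M_m(R) be the determinant of t computed in the commutative subring of M_m(R) generated by the t_{ij} (the order of the factors in each product is irrelevant by the commutation hypothesis). Then det(T) = det(D). -/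
/-!
Pairwise commuting blocks lie in a commutative subring `S` of the matrix ring, so the array of
blocks is the image of a matrix `M` over `S`. Silvester's theorem `Matrix.det_det` computes the
determinant of the assembled matrix as the determinant of the image of `det M`, and applying the
inclusion of `S` to the Leibniz formula for `det M` gives the block determinant.
-/

theorem map_prod_eq_noncommProd {F α S A : Type*} [CommMonoid S] [Monoid A] [FunLike F S A]
    [MonoidHomClass F S A] (f : F) (s : Finset α) (g : α → S) :
    f (∏ i ∈ s, g i) =
      s.noncommProd (fun i => f (g i)) fun _ _ _ _ _ => (Commute.all _ _).map f :=
  (congrArg f (Finset.noncommProd_eq_prod s g).symm).trans (Finset.map_noncommProd s g _ f)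

theorem noncommProd_univ_fin {A : Type*} [Monoid A] {n : ℕ} (f : Fin n → A)
    (hcomm : ((Finset.univ : Finset (Fin n)) : Set (Fin n)).Pairwise
      (Function.onFun Commute f)) :
    Finset.univ.noncommProd f hcomm = ((List.finRange n).map f).prod :=
  Multiset.noncommProd_coe ((List.finRange n).map f) _

theorem exists_isMulCommutative_subring_map_subtype_eq {ι κ A : Type*} [Ring A]
    (t : Matrix ι κ A) (hcomm : ∀ i j k l, Commute (t i j) (t k l)) :
    ∃ S : Subring A, IsMulCommutative S ∧ ∃ M : Matrix ι κ S, M.map S.subtype = t := by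
  refine ⟨Subring.closure (Set.range fun p : ι × κ => t p.1 p.2),
    Subring.isMulCommutative_closure ?_,
    .of fun i j => ⟨t i j, Subring.subset_closure ⟨(i, j), rfl⟩⟩, rfl⟩
  rintro _ ⟨p, rfl⟩ _ ⟨q, rfl⟩
  exact hcomm p.1 p.2 q.1 q.2

theorem map_det_eq_sum_noncommProd {ι S A : Type*} [CommRing S] [Ring A] [Fintype ι]
    [DecidableEq ι] (f : S →+* A) (M : Matrix ι ι S) :
    f M.det = ∑ σ : Equiv.Perm ι, (Equiv.Perm.sign σ : ℤ) •
      Finset.univ.noncommProd (fun i => f (M i (σ i)))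
        fun _ _ _ _ _ => (Commute.all _ _).map f := by
  rw [← Matrix.det_transpose, Matrix.det_apply, map_sum]
  refine Finset.sum_congr rfl fun σ _ => ?_
  simp only [Units.smul_def, map_zsmul, Matrix.transpose_apply, map_prod_eq_noncommProd f]

open scoped IsMulCommutative in
theorem det_blocks_comm_general {R ι κ : Type*} [CommRing R] [Fintype ι] [DecidableEq ι]
    [Fintype κ] [DecidableEq κ] (t : Matrix ι ι (Matrix κ κ R))
    (hcomm : ∀ i j k l, Commute (t i j) (t k l)) :
    (Matrix.comp ι ι κ κ R t).det =
      (∑ σ : Equiv.Perm ι, (Equiv.Perm.sign σ : ℤ) •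
        Finset.univ.noncommProd (fun i => t i (σ i)) fun _ _ _ _ _ => hcomm _ _ _ _).det := by
  obtain ⟨S, _, M, rfl⟩ := exists_isMulCommutative_subring_map_subtype_eq t hcomm
  calc
    (Matrix.comp ι ι κ κ R (M.map S.subtype)).det = (S.subtype M.det).det :=
      (Matrix.det_det M S.subtype).symm
    _ = _ := congrArg Matrix.det (map_det_eq_sum_noncommProd S.subtype M)

/-- Lemma 2.2 (lem_blocks): the determinant of an `(nm)×(nm)` block matrix whose `m×m`
blocks commute pairwise equals the determinant of its block determinant
`D = Σ_σ sign(σ) · t_{1σ(1)}⋯t_{nσ(n)}` (computed in the commutative subring of `M_m(R)`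
generated by the blocks). -/
theorem det_blocks_comm {R : Type*} [CommRing R] {n m : ℕ} (hn : 0 < n) (hm : 0 < m)
    (t : Fin n → Fin n → Matrix (Fin m) (Fin m) R)
    (hcomm : ∀ i j k l : Fin n, t i j * t k l = t k l * t i j) :
    (Matrix.of fun p q : Fin n × Fin m => t p.1 q.1 p.2 q.2).det =
      (∑ σ : Equiv.Perm (Fin n), (Equiv.Perm.sign σ : ℤ) •
        ((List.finRange n).map fun i => t i (σ i)).prod).det := by
  refine (det_blocks_comm_general (.of t) hcomm).trans ?_
  simp only [noncommProd_univ_fin, Matrix.of_apply]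
end

section
/- Let A be a noetherian commutative ring and I, J ⊆ A two ideals. For an ideal 𝔞 let A^∧_𝔞 := lim_n A/𝔞ⁿ denote the 𝔞-adic completion. The inclusions (I ∩ J)ⁿ ⊆ Iⁿ, (I ∩ J)ⁿ ⊆ Jⁿ, Iⁿ ⊆ (I + J)ⁿ and Jⁿ ⊆ (I + J)ⁿ induce a commutative square of natural ring homomorphisms A^∧_{I∩J} → A^∧_I → A^∧_{I+J} and A^∧_{I∩J} → A^∧_J → A^∧_{I+J}. This square is cartesian: the induced ring homomorphism from A^∧_{I∩J} to the fibre product A^∧_I ×_{A^∧_{I+J}} A^∧_J is bijective; equivalently, for every x ∈ A^∧_I and y ∈ A^∧_J having the same image in A^∧_{I+J}, there is a unique z ∈ A^∧_{I∩J} mapping to x and to y. -/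
/-!
For ideals `K` and `L` the sequence `0 → A ⧸ (K ⊓ L) → A ⧸ K × A ⧸ L → A ⧸ (K ⊔ L) → 0` is exact.
Taking `K = I ^ n` and `L = J ^ n` and passing to the limit gives the cartesian square, because
the filtrations `I ^ n ⊔ J ^ n` and `(I ⊔ J) ^ n` are cofinal in each other, and so are
`I ^ n ⊓ J ^ n` and `(I ⊓ J) ^ n`; the latter is where the Artin–Rees lemma enters.
-/

section Quotient

variable {A : Type*} [CommRing A] {K L M : Ideal A} {a b : A}

theorem quotient_mk_eq_mk_of_le (hKL : K ≤ L)
    (hab : Ideal.Quotient.mk K a = Ideal.Quotient.mk K b) :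
    Ideal.Quotient.mk L a = Ideal.Quotient.mk L b :=
  Ideal.Quotient.eq.2 (hKL (Ideal.Quotient.eq.1 hab))

theorem quotient_mk_eq_mk_of_inf_le (hKLM : K ⊓ L ≤ M)
    (hK : Ideal.Quotient.mk K a = Ideal.Quotient.mk K b)
    (hL : Ideal.Quotient.mk L a = Ideal.Quotient.mk L b) :
    Ideal.Quotient.mk M a = Ideal.Quotient.mk M b :=
  Ideal.Quotient.eq.2 (hKLM ⟨Ideal.Quotient.eq.1 hK, Ideal.Quotient.eq.1 hL⟩)

theorem exists_quotient_mk_eq_and_eq_of_mk_sup_eq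
    (hab : Ideal.Quotient.mk (K ⊔ L) a = Ideal.Quotient.mk (K ⊔ L) b) :
    ∃ c : A, Ideal.Quotient.mk K c = Ideal.Quotient.mk K a ∧
      Ideal.Quotient.mk L c = Ideal.Quotient.mk L b := by
  obtain ⟨k, hk, l, hl, hkl⟩ := Submodule.mem_sup.1 (Ideal.Quotient.eq.1 hab)
  have hc : a - k = b + l := by linear_combination -hkl
  refine ⟨a - k, ?_, ?_⟩
  · rw [map_sub, Ideal.Quotient.eq_zero_iff_mem.2 hk, sub_zero]
  · rw [hc, map_add, Ideal.Quotient.eq_zero_iff_mem.2 hl, add_zero]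

end Quotient

section ArtinRees

variable {A : Type*} [CommRing A] [IsNoetherianRing A] (I J : Ideal A) (n : ℕ)

theorem exists_pow_inf_pow_le_mul_pow : ∃ m, n ≤ m ∧ I ^ m ⊓ J ^ m ≤ (I * J) ^ n := by
  obtain ⟨k, artin_rees⟩ := Ideal.exists_pow_inf_eq_pow_smul I (J ^ n : Submodule A A)
  refine ⟨n + k, Nat.le_add_right n k, ?_⟩
  calc I ^ (n + k) ⊓ J ^ (n + k)
      ≤ I ^ (n + k) ⊓ J ^ n :=
        inf_le_inf_left _ (Ideal.pow_le_pow_right (Nat.le_add_right n k))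
    _ = I ^ n * (I ^ k ⊓ J ^ n) := by
        simpa only [smul_eq_mul, Ideal.mul_top, Nat.add_sub_cancel]
          using artin_rees (n + k) (Nat.le_add_left k n)
    _ ≤ I ^ n * J ^ n := Ideal.mul_mono_right inf_le_right
    _ = (I * J) ^ n := (mul_pow I J n).symm

theorem exists_pow_inf_pow_le_inf_pow : ∃ m, n ≤ m ∧ I ^ m ⊓ J ^ m ≤ (I ⊓ J) ^ n :=
  let ⟨m, hnm, hm⟩ := exists_pow_inf_pow_le_mul_pow I J n
  ⟨m, hnm, hm.trans (Ideal.pow_right_mono Ideal.mul_le_inf n)⟩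

end ArtinRees

section Filtration

variable {A ι : Type*} [CommRing A] [Preorder ι] {F G H S : ι → Ideal A}

/-- `x` is an element of the completion `lim A ⧸ F i` along a decreasing filtration `F`.
Compatibility is tested on representatives, so that the transition maps `A ⧸ F j → A ⧸ F i`
need not be mentioned. -/
def IsCompatibleFamily (F : ι → Ideal A) (x : ∀ i, A ⧸ F i) : Prop :=
  ∀ i j, i ≤ j → ∀ a : A, Ideal.Quotient.mk (F j) a = x j → Ideal.Quotient.mk (F i) a = x i

theorem IsCompatibleFamily.exists_common_representative
    {x : ∀ i, A ⧸ F i} {y : ∀ i, A ⧸ G i}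
    (hx : IsCompatibleFamily F x) (hy : IsCompatibleFamily G y)
    (hS : ∀ i, ∃ j, i ≤ j ∧ S j ≤ F i ⊔ G i)
    (hxy : ∀ (i : ι) (a b : A), Ideal.Quotient.mk (F i) a = x i → Ideal.Quotient.mk (G i) b = y i →
      Ideal.Quotient.mk (S i) a = Ideal.Quotient.mk (S i) b) (i : ι) :
    ∃ c : A, Ideal.Quotient.mk (F i) c = x i ∧ Ideal.Quotient.mk (G i) c = y i := by
  obtain ⟨j, hij, hSj⟩ := hS i
  obtain ⟨a, ha⟩ := Ideal.Quotient.mk_surjective (x j)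
  obtain ⟨b, hb⟩ := Ideal.Quotient.mk_surjective (y j)
  obtain ⟨c, hca, hcb⟩ := exists_quotient_mk_eq_and_eq_of_mk_sup_eq
    (quotient_mk_eq_mk_of_le hSj (hxy j a b ha hb))
  exact ⟨c, hca.trans (hx i j hij a ha), hcb.trans (hy i j hij b hb)⟩

theorem completion_square_cartesian_general [IsDirectedOrder ι]
    (hH : Antitone H) (hHF : H ≤ F) (hHG : H ≤ G)
    (hFG : ∀ i, ∃ j, i ≤ j ∧ F j ⊓ G j ≤ H i) (hS : ∀ i, ∃ j, i ≤ j ∧ S j ≤ F i ⊔ G i)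
    {x : ∀ i, A ⧸ F i} {y : ∀ i, A ⧸ G i}
    (hx : IsCompatibleFamily F x) (hy : IsCompatibleFamily G y)
    (hxy : ∀ (i : ι) (a b : A), Ideal.Quotient.mk (F i) a = x i → Ideal.Quotient.mk (G i) b = y i →
      Ideal.Quotient.mk (S i) a = Ideal.Quotient.mk (S i) b) :
    ∃! z : ∀ i, A ⧸ H i, IsCompatibleFamily H z ∧
      ∀ (i : ι) (a : A), Ideal.Quotient.mk (H i) a = z i →
        Ideal.Quotient.mk (F i) a = x i ∧ Ideal.Quotient.mk (G i) a = y i := by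
  choose c hcx hcy using hx.exists_common_representative hy hS hxy
  choose f le_f hf using hFG
  have mk_eq_of_represents {i j : ι} (hij : f i ≤ j) {a : A}
      (hax : Ideal.Quotient.mk (F j) a = x j) (hay : Ideal.Quotient.mk (G j) a = y j) :
      Ideal.Quotient.mk (H i) a = Ideal.Quotient.mk (H i) (c (f i)) :=
    quotient_mk_eq_mk_of_inf_le (hf i) ((hx _ _ hij a hax).trans (hcx _).symm)
      ((hy _ _ hij a hay).trans (hcy _).symm)
  refine ⟨fun i ↦ Ideal.Quotient.mk (H i) (c (f i)), ⟨fun i j hij a ha ↦ ?_, fun i a ha ↦ ?_⟩, ?_⟩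
  · obtain ⟨k, hik, hjk⟩ := exists_ge_ge (f i) (f j)
    calc Ideal.Quotient.mk (H i) a
        = Ideal.Quotient.mk (H i) (c (f j)) := quotient_mk_eq_mk_of_le (hH hij) ha
      _ = Ideal.Quotient.mk (H i) (c k) :=
          (quotient_mk_eq_mk_of_le (hH hij) (mk_eq_of_represents hjk (hcx k) (hcy k))).symm
      _ = Ideal.Quotient.mk (H i) (c (f i)) := mk_eq_of_represents hik (hcx k) (hcy k)
  · exact ⟨(quotient_mk_eq_mk_of_le (hHF i) ha).trans (hx _ _ (le_f i) _ (hcx _)),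
      (quotient_mk_eq_mk_of_le (hHG i) ha).trans (hy _ _ (le_f i) _ (hcy _))⟩
  · rintro z ⟨hz, hzxy⟩
    funext i
    obtain ⟨a, ha⟩ := Ideal.Quotient.mk_surjective (z (f i))
    obtain ⟨hax, hay⟩ := hzxy (f i) a ha
    exact (hz i (f i) (le_f i) a ha).symm.trans (mk_eq_of_represents le_rfl hax hay)

end Filtration

/-- Lemma 3.1(i) (lem_various-compl): for ideals `I`, `J` of a noetherian ring `A`, the
square of adic completions `A^∧_{I∩J} → A^∧_I, A^∧_J → A^∧_{I+J}` is cartesian.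
Completions are rendered as compatible families of elements of the quotients `A ⧸ 𝔞ⁿ`,
with compatibility and the transition maps expressed via representatives (which is
equivalent, the quotient maps being surjective): given compatible families `x` over the
powers of `I` and `y` over the powers of `J` with the same image over the powers of
`I + J`, there is a unique compatible family `z` over the powers of `I ∩ J` mapping to
`x` and to `y`. -/
theorem completion_square_cartesian {A : Type*} [CommRing A] [IsNoetherianRing A]
    (I J : Ideal A)
    (x : ∀ n : ℕ, A ⧸ I ^ n) (y : ∀ n : ℕ, A ⧸ J ^ n)
    (hx : ∀ m n : ℕ, m ≤ n → ∀ a : A,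
      Ideal.Quotient.mk (I ^ n) a = x n → Ideal.Quotient.mk (I ^ m) a = x m)
    (hy : ∀ m n : ℕ, m ≤ n → ∀ a : A,
      Ideal.Quotient.mk (J ^ n) a = y n → Ideal.Quotient.mk (J ^ m) a = y m)
    (hxy : ∀ (n : ℕ) (a b : A),
      Ideal.Quotient.mk (I ^ n) a = x n → Ideal.Quotient.mk (J ^ n) b = y n →
      Ideal.Quotient.mk ((I ⊔ J) ^ n) a = Ideal.Quotient.mk ((I ⊔ J) ^ n) b) :
    ∃! z : ∀ n : ℕ, A ⧸ (I ⊓ J) ^ n,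
      (∀ m n : ℕ, m ≤ n → ∀ a : A,
        Ideal.Quotient.mk ((I ⊓ J) ^ n) a = z n → Ideal.Quotient.mk ((I ⊓ J) ^ m) a = z m) ∧
      (∀ (n : ℕ) (a : A), Ideal.Quotient.mk ((I ⊓ J) ^ n) a = z n →
        Ideal.Quotient.mk (I ^ n) a = x n ∧ Ideal.Quotient.mk (J ^ n) a = y n) := by
  exact completion_square_cartesian_general (fun _ _ ↦ Ideal.pow_le_pow_right)
    (Ideal.pow_right_mono inf_le_left) (Ideal.pow_right_mono inf_le_right)
    (exists_pow_inf_pow_le_inf_pow I J)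
    (fun n ↦ ⟨n + n, Nat.le_add_left n n, Ideal.sup_pow_add_le_pow_sup_pow⟩) hx hy hxy
end

section
/- Let A be a noetherian commutative ring and I, J ⊆ A two ideals. For every n ∈ ℕ set Aₙ := A/Jⁿ, and let (Aₙ)^∧_I denote the completion of Aₙ with respect to the ideal I·Aₙ. Then the natural A-algebra homomorphism A^∧_{I+J} → lim_n (Aₙ)^∧_I, from the (I+J)-adic completion of A to the inverse limit over n of the I-adic completions of the quotients A/Jⁿ, is an isomorphism. -/
/-- Compatibility of a family over the powers of an ideal, expressed via representatives. -/
def IsCompatFamily {A : Type*} [CommRing A] (I : Ideal A) (z : ∀ n : ℕ, A ⧸ I ^ n) : Prop :=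
  ∀ m n : ℕ, m ≤ n → ∀ a : A,
    Ideal.Quotient.mk (I ^ n) a = z n → Ideal.Quotient.mk (I ^ m) a = z m

/-- Double compatibility of a family over the ideals `I^k + Jⁿ`; such families are exactly
the elements of `lim_n (A/Jⁿ)^∧_I`, using the identification
`(A/Jⁿ) ⧸ (I·(A/Jⁿ))^k = A ⧸ (I^k + Jⁿ)`. -/
def IsBicompatFamily {A : Type*} [CommRing A] (I J : Ideal A)
    (w : ∀ n k : ℕ, A ⧸ (I ^ k ⊔ J ^ n)) : Prop :=
  ∀ n k n' k' : ℕ, n ≤ n' → k ≤ k' → ∀ a : A,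
    Ideal.Quotient.mk (I ^ k' ⊔ J ^ n') a = w n' k' →
    Ideal.Quotient.mk (I ^ k ⊔ J ^ n) a = w n k

/-- The family over the ideals `I^k + Jⁿ` is the image of the family `z` over the powers
of `I + J` under the natural maps `A ⧸ (I+J)^{n+k} → A ⧸ (I^k + Jⁿ)`, expressed via
representatives. -/
def IsImageFamily {A : Type*} [CommRing A] (I J : Ideal A)
    (z : ∀ n : ℕ, A ⧸ (I ⊔ J) ^ n) (w : ∀ n k : ℕ, A ⧸ (I ^ k ⊔ J ^ n)) : Prop :=
  ∀ n k : ℕ, ∀ a : A,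
    Ideal.Quotient.mk ((I ⊔ J) ^ (n + k)) a = z (n + k) →
    Ideal.Quotient.mk (I ^ k ⊔ J ^ n) a = w n k

/-!
The systems of ideals `(I + J)^m` and `I^k + Jⁿ` are cofinal: `(I + J)^(n + k) ≤ I^k + Jⁿ`, and
`I^n + J^n ≤ (I + J)^n` on the diagonal. So a compatible family over either of them determines
one over the other, and compatibility makes the two passages mutually inverse.
-/

section

variable {A : Type*} [CommRing A]

theorem sup_pow_add_le_pow_sup_pow_swap (I J : Ideal A) (n k : ℕ) :
    (I ⊔ J) ^ (n + k) ≤ I ^ k ⊔ J ^ n :=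
  add_comm k n ▸ Ideal.sup_pow_add_le_pow_sup_pow

theorem pow_sup_pow_le_sup_pow (I J : Ideal A) (n : ℕ) : I ^ n ⊔ J ^ n ≤ (I ⊔ J) ^ n :=
  sup_le (Ideal.pow_right_mono le_sup_left n) (Ideal.pow_right_mono le_sup_right n)

theorem pow_sup_pow_le_pow_sup_pow (I J : Ideal A) {n k n' k' : ℕ} (hn : n ≤ n') (hk : k ≤ k') :
    I ^ k' ⊔ J ^ n' ≤ I ^ k ⊔ J ^ n :=
  sup_le_sup (Ideal.pow_le_pow_right hk) (Ideal.pow_le_pow_right hn)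

theorem forall_mk_eq_imp_mk_eq_iff_factor_eq {P Q : Ideal A} (h : P ≤ Q) (x : A ⧸ P) (y : A ⧸ Q) :
    (∀ a : A, Ideal.Quotient.mk P a = x → Ideal.Quotient.mk Q a = y) ↔
      Ideal.Quotient.factor h x = y := by
  obtain ⟨b, rfl⟩ := Ideal.Quotient.mk_surjective x
  refine ⟨fun H => H b rfl, fun hb a ha => ?_⟩
  rw [← hb, ← ha, Ideal.Quotient.factor_mk]

theorem isCompatFamily_iff_factor_eq {I : Ideal A} {z : ∀ n : ℕ, A ⧸ I ^ n} :
    IsCompatFamily I z ↔ ∀ (m n : ℕ) (hmn : m ≤ n),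
      Ideal.Quotient.factor (Ideal.pow_le_pow_right hmn) (z n) = z m :=
  forall₃_congr fun _ _ _ => forall_mk_eq_imp_mk_eq_iff_factor_eq _ _ _

variable {I J : Ideal A}

theorem isBicompatFamily_iff_factor_eq {w : ∀ n k : ℕ, A ⧸ (I ^ k ⊔ J ^ n)} :
    IsBicompatFamily I J w ↔ ∀ (n k n' k' : ℕ) (hn : n ≤ n') (hk : k ≤ k'),
      Ideal.Quotient.factor (pow_sup_pow_le_pow_sup_pow I J hn hk) (w n' k') = w n k :=
  forall₄_congr fun _ _ _ _ => forall₂_congr fun _ _ =>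
    forall_mk_eq_imp_mk_eq_iff_factor_eq _ _ _

/-- The natural map `A^∧_{I+J} → lim_n (A/Jⁿ)^∧_I` on families, with no compatibility imposed:
the entry at `(n, k)` is the reduction of the entry modulo `(I + J)^(n + k)`. -/
def imageFamily (z : ∀ n : ℕ, A ⧸ (I ⊔ J) ^ n) (n k : ℕ) : A ⧸ (I ^ k ⊔ J ^ n) :=
  Ideal.Quotient.factor (sup_pow_add_le_pow_sup_pow_swap I J n k) (z (n + k))

/-- The inverse of `imageFamily` on compatible families: the entry modulo `(I + J)^n` is the
reduction of the diagonal entry modulo `I^n + J^n`. -/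
def diagonalFamily (w : ∀ n k : ℕ, A ⧸ (I ^ k ⊔ J ^ n)) (n : ℕ) : A ⧸ (I ⊔ J) ^ n :=
  Ideal.Quotient.factor (pow_sup_pow_le_sup_pow I J n) (w n n)

theorem isImageFamily_iff_imageFamily_eq {z : ∀ n : ℕ, A ⧸ (I ⊔ J) ^ n}
    {w : ∀ n k : ℕ, A ⧸ (I ^ k ⊔ J ^ n)} : IsImageFamily I J z w ↔ imageFamily z = w := by
  simp only [funext_iff]
  exact forall₂_congr fun _ _ => forall_mk_eq_imp_mk_eq_iff_factor_eq _ _ _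

theorem IsCompatFamily.isBicompatFamily_imageFamily {z : ∀ n : ℕ, A ⧸ (I ⊔ J) ^ n}
    (hz : IsCompatFamily (I ⊔ J) z) : IsBicompatFamily I J (imageFamily z) := by
  rw [isCompatFamily_iff_factor_eq] at hz
  refine isBicompatFamily_iff_factor_eq.2 fun n k n' k' hn hk => ?_
  simp only [imageFamily, ← hz _ _ (add_le_add hn hk), Ideal.Quotient.factor_comp_apply]

theorem IsCompatFamily.diagonalFamily_imageFamily {z : ∀ n : ℕ, A ⧸ (I ⊔ J) ^ n}
    (hz : IsCompatFamily (I ⊔ J) z) : diagonalFamily (imageFamily z) = z := by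
  funext n
  rw [diagonalFamily, imageFamily, Ideal.Quotient.factor_comp_apply]
  exact isCompatFamily_iff_factor_eq.1 hz n (n + n) (Nat.le_add_left n n)

theorem IsBicompatFamily.isCompatFamily_diagonalFamily {w : ∀ n k : ℕ, A ⧸ (I ^ k ⊔ J ^ n)}
    (hw : IsBicompatFamily I J w) : IsCompatFamily (I ⊔ J) (diagonalFamily w) := by
  rw [isBicompatFamily_iff_factor_eq] at hw
  refine isCompatFamily_iff_factor_eq.2 fun m n hmn => ?_
  simp only [diagonalFamily, ← hw _ _ _ _ hmn hmn, Ideal.Quotient.factor_comp_apply]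

theorem IsBicompatFamily.imageFamily_diagonalFamily {w : ∀ n k : ℕ, A ⧸ (I ^ k ⊔ J ^ n)}
    (hw : IsBicompatFamily I J w) : imageFamily (diagonalFamily w) = w := by
  funext n k
  rw [imageFamily, diagonalFamily, Ideal.Quotient.factor_comp_apply]
  exact isBicompatFamily_iff_factor_eq.1 hw n k (n + k) (n + k)
    (Nat.le_add_right n k) (Nat.le_add_left k n)

end

theorem completion_sum_eq_limit_completion_general {A : Type*} [CommRing A] (I J : Ideal A) :
    (∀ z : ∀ n : ℕ, A ⧸ (I ⊔ J) ^ n, IsCompatFamily (I ⊔ J) z →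
      ∀ w : ∀ n k : ℕ, A ⧸ (I ^ k ⊔ J ^ n), IsImageFamily I J z w → IsBicompatFamily I J w) ∧
    (∀ z z' : ∀ n : ℕ, A ⧸ (I ⊔ J) ^ n, IsCompatFamily (I ⊔ J) z → IsCompatFamily (I ⊔ J) z' →
      ∀ w : ∀ n k : ℕ, A ⧸ (I ^ k ⊔ J ^ n),
        IsImageFamily I J z w → IsImageFamily I J z' w → z = z') ∧
    (∀ w : ∀ n k : ℕ, A ⧸ (I ^ k ⊔ J ^ n), IsBicompatFamily I J w →
      ∃ z : ∀ n : ℕ, A ⧸ (I ⊔ J) ^ n, IsCompatFamily (I ⊔ J) z ∧ IsImageFamily I J z w) := by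
  simp only [isImageFamily_iff_imageFamily_eq]
  refine ⟨?wellDefined, ?injective, ?surjective⟩
  case wellDefined =>
    rintro z hz _ rfl
    exact hz.isBicompatFamily_imageFamily
  case injective =>
    intro z z' hz hz' w hzw hz'w
    rw [← hz.diagonalFamily_imageFamily, hzw, ← hz'w, hz'.diagonalFamily_imageFamily]
  case surjective =>
    intro w hw
    exact ⟨diagonalFamily w, hw.isCompatFamily_diagonalFamily, hw.imageFamily_diagonalFamily⟩

/-- Lemma 3.1(ii) (lem_various-compl): for ideals `I`, `J` of a noetherian ring `A`, the
natural `A`-algebra homomorphism `A^∧_{I+J} → lim_n (A/Jⁿ)^∧_I` is an isomorphism.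
Rendered elementwise: the natural map from compatible families over the powers of `I + J`
to doubly compatible families over the ideals `I^k + Jⁿ` is well defined, injective and
surjective. -/
theorem completion_sum_eq_limit_completion {A : Type*} [CommRing A] [IsNoetherianRing A]
    (I J : Ideal A) :
    (∀ z : ∀ n : ℕ, A ⧸ (I ⊔ J) ^ n, IsCompatFamily (I ⊔ J) z →
      ∀ w : ∀ n k : ℕ, A ⧸ (I ^ k ⊔ J ^ n), IsImageFamily I J z w → IsBicompatFamily I J w) ∧
    (∀ z z' : ∀ n : ℕ, A ⧸ (I ⊔ J) ^ n, IsCompatFamily (I ⊔ J) z → IsCompatFamily (I ⊔ J) z' →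
      ∀ w : ∀ n k : ℕ, A ⧸ (I ^ k ⊔ J ^ n),
        IsImageFamily I J z w → IsImageFamily I J z' w → z = z') ∧
    (∀ w : ∀ n k : ℕ, A ⧸ (I ^ k ⊔ J ^ n), IsBicompatFamily I J w →
      ∃ z : ∀ n : ℕ, A ⧸ (I ⊔ J) ^ n, IsCompatFamily (I ⊔ J) z ∧ IsImageFamily I J z w) :=
  completion_sum_eq_limit_completion_general I J
end

section
/- Let p be a prime number, R a commutative ring in which p is invertible, H a finite group, P a p-subgroup of H, and {1} = Pₙ ⊆ Pₙ₋₁ ⊆ ⋯ ⊆ P₁ ⊆ P₀ = P a chain of subgroups, each of which is normal in H; set e_i := |P_i|⁻¹ · Σ_{g ∈ P_i} g ∈ R[H]. Then every left R[H]-module M admits the break decomposition M = M₋₁ ⊕ M₀ ⊕ ⋯ ⊕ M_{n−1}, an internal direct sum of R[H]-submodules, where M₋₁ := e₀·M and M_i := e_{i+1}(1 − e_i)·M for 0 ≤ i ≤ n−1, and this decomposition satisfies: M₋₁ = M^P, the submodule of P-invariants; M_i^{P_i} = 0 for every 0 ≤ i ≤ n−1; and M_i^{P_j} = M_i whenever j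 > i. -/
/-- The averaging element `e_Q := |Q|⁻¹ Σ_{g ∈ Q} g` of the group algebra `R[H]`,
for a subgroup `Q` of `H` whose order is invertible in `R`. -/
noncomputable def avgIdem (R : Type*) {H : Type*} [CommRing R] [Group H]
    (Q : Subgroup H) : MonoidAlgebra R H :=
  Ring.inverse (Nat.card Q : R) • ∑ᶠ g : Q, MonoidAlgebra.of R H (g : H)

/-- The orthogonal family of central idempotents `f₀ := e₀`, `f_i := e_i·(1 − e_{i−1})`
associated to a chain of normal subgroups `P 0 ⊇ P 1 ⊇ ⋯ ⊇ P n = 1`.  In the indexing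
of the paper, `f_i` cuts out the break component `M_{i-1}` of an `R[H]`-module `M`. -/
noncomputable def brkIdem (R : Type*) {H : Type*} [CommRing R] [Group H]
    (P : ℕ → Subgroup H) (i : ℕ) : MonoidAlgebra R H :=
  if i = 0 then avgIdem R (P 0) else avgIdem R (P i) * (1 - avgIdem R (P (i - 1)))

/-!
For subgroups `Q ≤ Q'` of finite invertible order one has `e_Q e_{Q'} = e_{Q'} = e_{Q'} e_Q`, so a
decreasing chain of subgroups gives an increasing chain of idempotents, ending at `1` for the
trivial subgroup. The break idempotents `f_i = e_i (1 - e_{i-1}) = e_i - e_{i-1}` are its successive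
differences: they are pairwise orthogonal and their sum telescopes to `1`. They are central because
each `P i` is normal. Since `e_Q` projects a module onto its `Q`-invariants, the claims about
invariants reduce to `e_j f_i = f_i` for `i ≤ j` and `f_i e_{i-1} = 0`.
-/

section IdempotentChain

variable {A : Type*} [Ring A] {e : ℕ → A} {n i j k : ℕ}

/-- An increasing chain `e 0 ≤ e 1 ≤ ⋯ ≤ e n` of idempotents, where `a ≤ b` means
`b * a = a = a * b`. The case `i = j` of either field is idempotency; nothing is required of `e i`
for `i > n`. -/
structure IsIdempotentChain (e : ℕ → A) (n : ℕ) : Prop where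
  mul_eq_right : ∀ {i j : ℕ}, i ≤ j → j ≤ n → e j * e i = e i
  mul_eq_left : ∀ {i j : ℕ}, i ≤ j → j ≤ n → e i * e j = e i

/-- The successive differences `e i - e (i - 1)` of a chain of idempotents, with `e (-1) = 0`.
They are written as the products `e i * (1 - e (i - 1))`, as in `brkIdem`; the two agree along a
chain by `IsIdempotentChain.gap_succ`. -/
def idempotentGap (e : ℕ → A) : ℕ → A
  | 0 => e 0
  | i + 1 => e (i + 1) * (1 - e i)

theorem idempotentGap_mem (S : Subring A) (he : ∀ i ≤ n, e i ∈ S) :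
    ∀ i ≤ n, idempotentGap e i ∈ S
  | 0, hi => he 0 hi
  | i + 1, hi => S.mul_mem (he _ hi) (S.sub_mem S.one_mem (he i (Nat.le_of_succ_le hi)))

namespace IsIdempotentChain

theorem gap_succ (he : IsIdempotentChain e n) (hi : i + 1 ≤ n) :
    idempotentGap e (i + 1) = e (i + 1) - e i := by
  rw [idempotentGap, mul_sub, mul_one, he.mul_eq_right i.le_succ hi]

theorem sum_gap (he : IsIdempotentChain e n) (hk : k ≤ n) :
    ∑ i ∈ Finset.range (k + 1), idempotentGap e i = e k := by
  induction k with
  | zero => simp [idempotentGap]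
  | succ k ih =>
    rw [Finset.sum_range_succ, ih (Nat.le_of_succ_le hk), he.gap_succ hk, add_sub_cancel]

theorem mul_gap (he : IsIdempotentChain e n) (hij : i ≤ j) (hj : j ≤ n) :
    e j * idempotentGap e i = idempotentGap e i := by
  cases i with
  | zero => exact he.mul_eq_right hij hj
  | succ i => rw [idempotentGap, ← mul_assoc, he.mul_eq_right hij hj]

theorem mul_gap_eq_zero (he : IsIdempotentChain e n) (hij : i < j) (hj : j ≤ n) :
    e i * idempotentGap e j = 0 := by
  obtain _ | j := j
  · exact absurd hij i.not_lt_zero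
  · rw [he.gap_succ hj, mul_sub, he.mul_eq_left hij.le hj,
      he.mul_eq_left (Nat.le_of_lt_succ hij) (Nat.le_of_succ_le hj), sub_self]

theorem gap_mul_eq_zero (he : IsIdempotentChain e n) (hij : i < j) (hj : j ≤ n) :
    idempotentGap e j * e i = 0 := by
  obtain _ | j := j
  · exact absurd hij i.not_lt_zero
  · rw [he.gap_succ hj, sub_mul, he.mul_eq_right hij.le hj,
      he.mul_eq_right (Nat.le_of_lt_succ hij) (Nat.le_of_succ_le hj), sub_self]

theorem gap_mul (he : IsIdempotentChain e n) (hi : i ≤ n) :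
    idempotentGap e i * e i = idempotentGap e i := by
  cases i with
  | zero => exact he.mul_eq_right le_rfl hi
  | succ i => rw [he.gap_succ hi, sub_mul, he.mul_eq_right le_rfl hi, he.mul_eq_left i.le_succ hi]

theorem gap_mul_gap_of_ne (he : IsIdempotentChain e n) (hi : i ≤ n) (hj : j ≤ n) (hij : i ≠ j) :
    idempotentGap e i * idempotentGap e j = 0 := by
  rcases hij.lt_or_gt with hlt | hgt
  · rw [← he.gap_mul hi, mul_assoc, he.mul_gap_eq_zero hlt hj, mul_zero]
  · rw [← he.mul_gap le_rfl hj, ← mul_assoc, he.gap_mul_eq_zero hgt hi, zero_mul]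

theorem completeOrthogonalIdempotents_gap (he : IsIdempotentChain e n) (hn : e n = 1) :
    CompleteOrthogonalIdempotents fun i : Fin (n + 1) ↦ idempotentGap e i := by
  refine CompleteOrthogonalIdempotents.iff_ortho_complete.mpr ⟨fun i j hij ↦ ?_, ?_⟩
  · exact he.gap_mul_gap_of_ne i.is_le j.is_le (Fin.val_ne_of_ne hij)
  · rw [Fin.sum_univ_eq_sum_range, he.sum_gap le_rfl, hn]

end IsIdempotentChain

end IdempotentChain

theorem eq_zero_of_sum_eq_zero_of_orthogonalIdempotents {A I M : Type*} [Semiring A] [Fintype I]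
    [AddCommMonoid M] [Module A M] {f : I → A} (hf : OrthogonalIdempotents f) {c : I → M}
    (hc : ∀ i, f i • c i = c i) (hsum : ∑ i, c i = 0) (i : I) : c i = 0 := by
  have smul_of_ne (j : I) (hj : j ≠ i) : f i • c j = 0 := by
    rw [← hc j, ← mul_smul, hf.ortho hj.symm, zero_smul]
  calc
    c i = ∑ j, f i • c j := by rw [Fintype.sum_eq_single i smul_of_ne, hc i]
    _ = 0 := by rw [← Finset.smul_sum, hsum, smul_zero]

section Average

open MonoidAlgebra

variable {R H : Type*} [CommRing R] [Group H] {Q Q' : Subgroup H}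

theorem avgIdem_eq_sum (Q : Subgroup H) [Fintype Q] :
    avgIdem R Q = Ring.inverse (Nat.card Q : R) • ∑ g : Q, of R H g := by
  rw [avgIdem, finsum_eq_sum_of_fintype]

theorem of_mul_avgIdem [Finite Q] {g : H} (hg : g ∈ Q) :
    of R H g * avgIdem R Q = avgIdem R Q := by
  have := Fintype.ofFinite Q
  simp only [avgIdem_eq_sum, mul_smul_comm, Finset.mul_sum, ← map_mul]
  exact congrArg _ (Equiv.sum_comp (Equiv.mulLeft (⟨g, hg⟩ : Q)) fun x ↦ of R H x)

theorem avgIdem_mul_of [Finite Q] {g : H} (hg : g ∈ Q) :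
    avgIdem R Q * of R H g = avgIdem R Q := by
  have := Fintype.ofFinite Q
  simp only [avgIdem_eq_sum, smul_mul_assoc, Finset.sum_mul, ← map_mul]
  exact congrArg _ (Equiv.sum_comp (Equiv.mulRight (⟨g, hg⟩ : Q)) fun x ↦ of R H x)

theorem avgIdem_smul_eq_self_iff [Finite Q] (hQ : IsUnit (Nat.card Q : R)) {M : Type*}
    [AddCommGroup M] [Module (MonoidAlgebra R H) M] {x : M} :
    avgIdem R Q • x = x ↔ ∀ g ∈ Q, of R H g • x = x := by
  have := Fintype.ofFinite Q
  refine ⟨fun hx g hg ↦ ?_, fun hx ↦ ?_⟩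
  · rw [← hx, ← mul_smul, of_mul_avgIdem hg]
  · have sum_smul_eq : (∑ g : Q, of R H g) • x = (Nat.card Q : MonoidAlgebra R H) • x := by
      rw [Finset.sum_smul, Finset.sum_congr rfl fun (g : Q) _ ↦ hx g g.2, Finset.sum_const,
        Finset.card_univ, ← Nat.card_eq_fintype_card, Nat.cast_smul_eq_nsmul]
    rw [avgIdem_eq_sum, Algebra.smul_def, mul_smul, sum_smul_eq, ← mul_smul,
      ← map_natCast (algebraMap R (MonoidAlgebra R H)), ← map_mul,
      Ring.inverse_mul_cancel _ hQ, map_one, one_smul]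

theorem avgIdem_mul_avgIdem_of_le [Finite Q] [Finite Q'] (hQ : IsUnit (Nat.card Q : R))
    (hle : Q ≤ Q') : avgIdem R Q * avgIdem R Q' = avgIdem R Q' :=
  (avgIdem_smul_eq_self_iff hQ).mpr fun _ hg ↦ of_mul_avgIdem (hle hg)

theorem avgIdem_mul_avgIdem_of_ge [Finite Q] [Finite Q'] (hQ' : IsUnit (Nat.card Q' : R))
    (hge : Q' ≤ Q) : avgIdem R Q * avgIdem R Q' = avgIdem R Q := by
  have := Fintype.ofFinite Q'
  rw [avgIdem_eq_sum Q', mul_smul_comm, Finset.mul_sum,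
    Finset.sum_congr rfl fun (g : Q') _ ↦ avgIdem_mul_of (hge g.2), Finset.sum_const,
    Finset.card_univ, ← Nat.card_eq_fintype_card, ← Nat.cast_smul_eq_nsmul R, smul_smul,
    Ring.inverse_mul_cancel _ hQ', one_smul]

theorem avgIdem_bot : avgIdem R (⊥ : Subgroup H) = 1 := by
  have := Fintype.ofFinite (⊥ : Subgroup H)
  rw [avgIdem_eq_sum, Fintype.sum_subsingleton _ (1 : (⊥ : Subgroup H))]
  simp [one_def]

theorem avgIdem_mem_center [Finite Q] (hQ : Q.Normal) :
    avgIdem R Q ∈ Subring.center (MonoidAlgebra R H) := by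
  have := Fintype.ofFinite Q
  have of_mul_comm (h : H) : of R H h * avgIdem R Q = avgIdem R Q * of R H h := by
    simp only [avgIdem_eq_sum, mul_smul_comm, smul_mul_assoc, Finset.mul_sum, Finset.sum_mul,
      ← map_mul]
    refine congrArg _ (Fintype.sum_equiv (MulAut.conjNormal h : MulAut Q).toEquiv _ _ fun g ↦ ?_)
    simp
  refine Subring.mem_center_iff.mpr fun r ↦ ?_
  induction r using MonoidAlgebra.induction_on with
  | of h => exact of_mul_comm h
  | add a b ha hb => rw [add_mul, mul_add, ha, hb]
  | smul c a ha => rw [smul_mul_assoc, mul_smul_comm, ha]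

theorem isUnit_natCast_card_of_le (hQ' : IsUnit (Nat.card Q' : R)) (hle : Q ≤ Q') :
    IsUnit (Nat.card Q : R) :=
  isUnit_of_dvd_unit (Nat.cast_dvd_cast (Subgroup.card_dvd_of_le hle)) hQ'

theorem isUnit_natCast_card_of_isPGroup [Finite Q] {p : ℕ} (hp : p.Prime)
    (hpR : IsUnit (p : R)) (hQ : IsPGroup p Q) : IsUnit (Nat.card Q : R) := by
  have := Fact.mk hp
  obtain ⟨m, hm⟩ := IsPGroup.iff_card.mp hQ
  rw [hm, Nat.cast_pow]
  exact hpR.pow m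

theorem isIdempotentChain_avgIdem {P : ℕ → Subgroup H} {n : ℕ} (hfin : ∀ i ≤ n, Finite (P i))
    (hcard : ∀ i ≤ n, IsUnit (Nat.card (P i) : R))
    (hchain : ∀ i j : ℕ, i ≤ j → j ≤ n → P j ≤ P i) :
    IsIdempotentChain (fun i ↦ avgIdem R (P i)) n where
  mul_eq_right {i j} hij hj :=
    have := hfin i (hij.trans hj)
    have := hfin j hj
    avgIdem_mul_avgIdem_of_le (hcard j hj) (hchain i j hij hj)
  mul_eq_left {i j} hij hj :=
    have := hfin i (hij.trans hj)
    have := hfin j hj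
    avgIdem_mul_avgIdem_of_ge (hcard j hj) (hchain i j hij hj)

theorem brkIdem_eq_idempotentGap (P : ℕ → Subgroup H) :
    brkIdem R P = idempotentGap fun i ↦ avgIdem R (P i) := by
  funext i
  cases i <;> simp [brkIdem, idempotentGap]

theorem brkIdem_mem_center {P : ℕ → Subgroup H} {n : ℕ} (hfin : ∀ i ≤ n, Finite (P i))
    (hnorm : ∀ i ≤ n, (P i).Normal) (i : ℕ) (hi : i ≤ n) :
    brkIdem R P i ∈ Subring.center (MonoidAlgebra R H) := by
  rw [brkIdem_eq_idempotentGap]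
  refine idempotentGap_mem _ (fun j hj ↦ ?_) i hi
  have := hfin j hj
  exact avgIdem_mem_center (hnorm j hj)

end Average

theorem break_decomposition_general {R H : Type*} [CommRing R] [Group H]
    (n : ℕ) (P : ℕ → Subgroup H) [Finite (P 0)]
    (hunit : IsUnit (Nat.card (P 0) : R))
    (hchain : ∀ i j : ℕ, i ≤ j → j ≤ n → P j ≤ P i)
    (hbot : P n = ⊥)
    (hnorm : ∀ i ≤ n, (P i).Normal)
    {M : Type*} [AddCommGroup M] [Module (MonoidAlgebra R H) M] :
    (∀ x : M, ∑ i ∈ Finset.range (n + 1), brkIdem R P i • x = x) ∧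
    (∀ c : ℕ → M, (∀ i ≤ n, brkIdem R P i • c i = c i) →
      ∑ i ∈ Finset.range (n + 1), c i = 0 → ∀ i ≤ n, c i = 0) ∧
    (∀ i ≤ n, ∀ (r : MonoidAlgebra R H) (x : M),
      brkIdem R P i • x = x → brkIdem R P i • (r • x) = r • x) ∧
    (∀ x : M, brkIdem R P 0 • x = x ↔ ∀ g ∈ P 0, MonoidAlgebra.of R H g • x = x) ∧
    (∀ k : ℕ, 1 ≤ k → k ≤ n → ∀ x : M, brkIdem R P k • x = x →
      (∀ g ∈ P (k - 1), MonoidAlgebra.of R H g • x = x) → x = 0) ∧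
    (∀ k : ℕ, 1 ≤ k → k ≤ n → ∀ j : ℕ, k ≤ j → j ≤ n → ∀ x : M,
      brkIdem R P k • x = x → ∀ g ∈ P j, MonoidAlgebra.of R H g • x = x) := by
  have hle (i : ℕ) (hi : i ≤ n) : P i ≤ P 0 := hchain 0 i i.zero_le hi
  have hfin (i : ℕ) (hi : i ≤ n) : Finite (P i) :=
    Finite.of_injective _ (Subgroup.inclusion_injective (hle i hi))
  have hcard (i : ℕ) (hi : i ≤ n) : IsUnit (Nat.card (P i) : R) :=
    isUnit_natCast_card_of_le hunit (hle i hi)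
  have invariant_iff (i : ℕ) (hi : i ≤ n) (x : M) :
      avgIdem R (P i) • x = x ↔ ∀ g ∈ P i, MonoidAlgebra.of R H g • x = x :=
    have := hfin i hi
    avgIdem_smul_eq_self_iff (hcard i hi)
  have he := isIdempotentChain_avgIdem hfin hcard hchain
  have hf := he.completeOrthogonalIdempotents_gap (hbot ▸ avgIdem_bot)
  have hcentral := brkIdem_mem_center (R := R) hfin hnorm
  rw [brkIdem_eq_idempotentGap] at hcentral ⊢
  refine ⟨fun x ↦ ?_, fun c hc hsum i hi ↦ ?_, fun i hi r x hx ↦ ?_, invariant_iff 0 n.zero_le,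
    fun k hk hkn x hx hinv ↦ ?_, fun k _ _ j hkj hj x hx ↦ (invariant_iff j hj x).mp ?_⟩
  · rw [← Finset.sum_smul, Finset.sum_range, hf.complete, one_smul]
  · exact eq_zero_of_sum_eq_zero_of_orthogonalIdempotents hf.toOrthogonalIdempotents
      (fun i ↦ hc i i.is_le) (Finset.sum_range c ▸ hsum) ⟨i, Nat.lt_succ_of_le hi⟩
  · rw [← mul_smul, ← Subring.mem_center_iff.mp (hcentral i hi) r, mul_smul, hx]
  · rw [← hx, ← (invariant_iff (k - 1) (by lia) x).mpr hinv, ← mul_smul,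
      he.gap_mul_eq_zero (by lia) hkn, zero_smul]
  · rw [← hx, ← mul_smul, he.mul_gap hkj hj]

/-- §3.1 of Chapter 4 (subsec_breaks): every left `R[H]`-module `M` admits the break
decomposition `M = M₋₁ ⊕ M₀ ⊕ ⋯ ⊕ M_{n−1}` into `R[H]`-submodules, where (in shifted
indexing) the component `M_{k-1}` is `{x | f_k • x = x}`, with: `M₋₁ = M^P`;
`M_i^{P_i} = 0` for `0 ≤ i ≤ n−1`; and `M_i^{P_j} = M_i` whenever `j > i`. -/
theorem break_decomposition {R H : Type*} [CommRing R] [Group H] [Finite H]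
    (p : ℕ) (hp : p.Prime) (hpR : IsUnit (p : R))
    (n : ℕ) (P : ℕ → Subgroup H)
    (hPp : IsPGroup p (P 0))
    (hchain : ∀ i j : ℕ, i ≤ j → j ≤ n → P j ≤ P i)
    (hbot : P n = ⊥)
    (hnorm : ∀ i ≤ n, (P i).Normal)
    {M : Type*} [AddCommGroup M] [Module (MonoidAlgebra R H) M] :
    -- the components sum to `M` …
    (∀ x : M, ∑ i ∈ Finset.range (n + 1), brkIdem R P i • x = x) ∧
    -- … the sum is direct …
    (∀ c : ℕ → M, (∀ i ≤ n, brkIdem R P i • c i = c i) →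
      ∑ i ∈ Finset.range (n + 1), c i = 0 → ∀ i ≤ n, c i = 0) ∧
    -- … and each component is an `R[H]`-submodule
    (∀ i ≤ n, ∀ (r : MonoidAlgebra R H) (x : M),
      brkIdem R P i • x = x → brkIdem R P i • (r • x) = r • x) ∧
    -- `M₋₁ = M^P`
    (∀ x : M, brkIdem R P 0 • x = x ↔ ∀ g ∈ P 0, MonoidAlgebra.of R H g • x = x) ∧
    -- `M_i^{P_i} = 0` for `i ≥ 0` (component `k = i + 1`)
    (∀ k : ℕ, 1 ≤ k → k ≤ n → ∀ x : M, brkIdem R P k • x = x →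
      (∀ g ∈ P (k - 1), MonoidAlgebra.of R H g • x = x) → x = 0) ∧
    -- `M_i^{P_j} = M_i` for `j > i` (component `k = i + 1`, subgroups `P j` with `j ≥ k`)
    (∀ k : ℕ, 1 ≤ k → k ≤ n → ∀ j : ℕ, k ≤ j → j ≤ n → ∀ x : M,
      brkIdem R P k • x = x → ∀ g ∈ P j, MonoidAlgebra.of R H g • x = x) :=
  break_decomposition_general n P (isUnit_natCast_card_of_isPGroup hp hpR hPp) hchain hbot hnorm
end

section
/- Let p be a prime number, R a commutative ring in which p is invertible, H a finite group, P a p-subgroup of H, and {1} = Pₙ ⊆ Pₙ₋₁ ⊆ ⋯ ⊆ P₁ ⊆ P₀ = P a chain of subgroups, each normal in H; for an R[H]-module M let M = M₋₁ ⊕ M₀ ⊕ ⋯ ⊕ M_{n−1} be its break decomposition (M₋₁ := e₀·M, M_i := e_{i+1}(1 − e_i)·M where e_i := |P_i|⁻¹ Σ_{g ∈ P_i} g). Then for R[H]-modules M, N: (a) every R[H]-linear map φ : M → N satisfies φ(M_i) ⊆ N_i for all i ∈ {−1, 0, …, n−1}; consequently Hom_{R[H]}(M_i, N_j) = 0 whenever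 i ≠ j; (b) equipping M ⊗_R N with the diagonal H-action g·(m ⊗ n) = g·m ⊗ g·n, for i ≠ j the image of M_i ⊗_R N_j in M ⊗_R N is contained in (M ⊗_R N)_{max(i,j)}, and the image of M_i ⊗_R N_i is contained in the sum Σ_{j ≤ i} (M ⊗_R N)_j (indices ordered with −1 < 0 < 1 < ⋯ < n−1). -/
open scoped TensorProduct

/-!
The element `e_Q` acts as a projection onto the `Q`-invariants. Hence `x` lies in the component
cut out by `f_{k+1}` exactly when it is `P (k+1)`-invariant and killed by `e_{P k}`. If `i < k + 1`,
a vector of the `i`-th component is `P k`-invariant, so `e_{P k}` fixes it; this makes distinct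
components disjoint. Tensoring with such a vector is a `P k`-equivariant map, so it commutes with
`e_{P k}`; this settles tensor products with distinct breaks. For equal breaks, `f_0 + ⋯ + f_i`
acts as `e_{P i}` by telescoping, which fixes the `P i`-invariant vector `x ⊗ y`.
-/

section

open Representation

lemma map_asAlgebraHom_of_isIntertwiningMap {k G V W : Type*} [CommSemiring k] [Monoid G]
    [AddCommMonoid V] [Module k V] [AddCommMonoid W] [Module k W]
    {ρ : Representation k G V} {τ : Representation k G W} {φ : V →ₗ[k] W}
    (hφ : ρ.IsIntertwiningMap τ φ) (a : MonoidAlgebra k G) (v : V) :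
    φ (ρ.asAlgebraHom a v) = τ.asAlgebraHom a (φ v) := by
  induction a using MonoidAlgebra.induction_on with
  | of g => simpa only [asAlgebraHom_of] using hφ.isIntertwining g v
  | add a b ha hb => simp only [map_add, LinearMap.add_apply, ha, hb]
  | smul r a ha => simp only [map_smul, LinearMap.smul_apply, ha]

/-- The subgroup `Q` is finite and its order is a unit of `R`, so that averaging over `Q` makes
sense on `R`-modules. Finiteness is explicit because `Nat.card` is `0` on infinite types. -/
structure HasInvertibleOrder (R : Type*) {H : Type*} [CommRing R] [Group H]
    (Q : Subgroup H) : Prop where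
  finite : Finite Q
  isUnit_card : IsUnit (Nat.card Q : R)

variable {R H : Type*} [CommRing R] [Group H]

lemma HasInvertibleOrder.mono {K Q : Subgroup H} (hQ : HasInvertibleOrder R Q) (hKQ : K ≤ Q) :
    HasInvertibleOrder R K where
  finite := have := hQ.finite; Finite.of_injective _ (Subgroup.inclusion_injective hKQ)
  isUnit_card := isUnit_of_dvd_unit (Nat.cast_dvd_cast (Subgroup.card_dvd_of_le hKQ)) hQ.isUnit_card

lemma HasInvertibleOrder.of_isPGroup {p : ℕ} (hp : p.Prime) (hpR : IsUnit (p : R))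
    {Q : Subgroup H} [Finite Q] (hQ : IsPGroup p Q) : HasInvertibleOrder R Q where
  finite := inferInstance
  isUnit_card := by
    have : Fact p.Prime := ⟨hp⟩
    obtain ⟨k, hk⟩ := IsPGroup.iff_card.mp hQ
    rw [hk, Nat.cast_pow]
    exact hpR.pow k

variable {M N : Type*} [AddCommGroup M] [Module R M] [AddCommGroup N] [Module R N]
  {ρ : Representation R H M} {τ : Representation R H N}

/-- The submodule `M^Q` of vectors fixed by the subgroup `Q`. -/
noncomputable abbrev subgroupInvariants (ρ : Representation R H M) (Q : Subgroup H) :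
    Submodule R M :=
  invariants (ρ.comp Q.subtype)

lemma subgroupInvariants_antitone (ρ : Representation R H M) : Antitone (subgroupInvariants ρ) :=
  fun _ _ hKQ _ hx g ↦ hx ⟨g, hKQ g.2⟩

lemma tmul_mem_subgroupInvariants {Q : Subgroup H} {x : M} {y : N}
    (hx : x ∈ subgroupInvariants ρ Q) (hy : y ∈ subgroupInvariants τ Q) :
    x ⊗ₜ[R] y ∈ subgroupInvariants (ρ.tprod τ) Q :=
  fun g ↦ congrArg₂ (· ⊗ₜ[R] ·) (hx g) (hy g)

lemma asAlgebraHom_avgIdem_apply (ρ : Representation R H M) (Q : Subgroup H) [Fintype Q] (x : M) :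
    ρ.asAlgebraHom (avgIdem R Q) x = Ring.inverse (Nat.card Q : R) • ∑ g : Q, ρ g x := by
  simp only [avgIdem, finsum_eq_sum_of_fintype, map_smul, map_sum, asAlgebraHom_of,
    LinearMap.smul_apply, LinearMap.sum_apply]

lemma isProj_asAlgebraHom_avgIdem (ρ : Representation R H M) {Q : Subgroup H}
    (hQ : HasInvertibleOrder R Q) :
    LinearMap.IsProj (subgroupInvariants ρ Q) (ρ.asAlgebraHom (avgIdem R Q)) := by
  have := hQ.finite
  let _ := Fintype.ofFinite Q
  let _ : Invertible (Fintype.card Q : R) := (Nat.card_eq_fintype_card (α := Q) ▸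
    hQ.isUnit_card).invertible
  have h_averageMap : ρ.asAlgebraHom (avgIdem R Q) = averageMap (ρ.comp Q.subtype) := by
    ext x
    simp [asAlgebraHom_avgIdem_apply, GroupAlgebra.average, LinearMap.sum_apply]
  exact h_averageMap ▸ isProj_averageMap _

lemma map_asAlgebraHom_avgIdem {Q : Subgroup H} [Finite Q] {φ : M →ₗ[R] N}
    (hφ : IsIntertwiningMap (ρ.comp Q.subtype) (τ.comp Q.subtype) φ) (x : M) :
    φ (ρ.asAlgebraHom (avgIdem R Q) x) = τ.asAlgebraHom (avgIdem R Q) (φ x) := by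
  let _ := Fintype.ofFinite Q
  simp only [asAlgebraHom_avgIdem_apply, map_smul, map_sum]
  exact congrArg _ (Finset.sum_congr rfl fun g _ ↦ hφ.isIntertwining g x)

lemma asAlgebraHom_avgIdem_tmul {Q : Subgroup H} [Finite Q] {x : M}
    (hx : x ∈ subgroupInvariants ρ Q) (y : N) :
    (ρ.tprod τ).asAlgebraHom (avgIdem R Q) (x ⊗ₜ[R] y) =
      x ⊗ₜ[R] τ.asAlgebraHom (avgIdem R Q) y := by
  have tmul_left_equivariant : IsIntertwiningMap (τ.comp Q.subtype)
      ((ρ.tprod τ).comp Q.subtype) (TensorProduct.mk R M N x) :=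
    ⟨fun g y ↦ congrArg (· ⊗ₜ[R] τ g y) (hx g).symm⟩
  exact (map_asAlgebraHom_avgIdem tmul_left_equivariant y).symm

/-- The break component of `ρ` cut out by the idempotent `brkIdem R P i`, written `M_{i-1}` in the
paper. It is encoded as the fixed points of the idempotent, not as its range. -/
noncomputable def breakComponent (ρ : Representation R H M) (P : ℕ → Subgroup H) (i : ℕ) :
    Submodule R M :=
  LinearMap.eqLocus (ρ.asAlgebraHom (brkIdem R P i)) LinearMap.id

variable {P : ℕ → Subgroup H}

lemma mem_breakComponent {i : ℕ} {x : M} :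
    x ∈ breakComponent ρ P i ↔ ρ.asAlgebraHom (brkIdem R P i) x = x :=
  Iff.rfl

lemma map_mem_breakComponent {φ : M →ₗ[R] N} (hφ : ρ.IsIntertwiningMap τ φ) {i : ℕ} {x : M}
    (hx : x ∈ breakComponent ρ P i) : φ x ∈ breakComponent τ P i := by
  rw [mem_breakComponent] at hx ⊢
  rw [← map_asAlgebraHom_of_isIntertwiningMap hφ, hx]

lemma brkIdem_zero : brkIdem R P 0 = avgIdem R (P 0) :=
  if_pos rfl

lemma asAlgebraHom_brkIdem_succ_apply {k : ℕ} (hP : HasInvertibleOrder R (P k))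
    (hle : P (k + 1) ≤ P k) (x : M) :
    ρ.asAlgebraHom (brkIdem R P (k + 1)) x =
      ρ.asAlgebraHom (avgIdem R (P (k + 1))) x - ρ.asAlgebraHom (avgIdem R (P k)) x := by
  have h_fixed : ρ.asAlgebraHom (avgIdem R (P (k + 1))) (ρ.asAlgebraHom (avgIdem R (P k)) x) =
      ρ.asAlgebraHom (avgIdem R (P k)) x :=
    (isProj_asAlgebraHom_avgIdem ρ (hP.mono hle)).map_id _
      (subgroupInvariants_antitone ρ hle ((isProj_asAlgebraHom_avgIdem ρ hP).map_mem x))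
  simp [brkIdem, mul_sub, h_fixed]

lemma mem_breakComponent_zero (hP : HasInvertibleOrder R (P 0)) {x : M} :
    x ∈ breakComponent ρ P 0 ↔ x ∈ subgroupInvariants ρ (P 0) := by
  rw [mem_breakComponent, brkIdem_zero, (isProj_asAlgebraHom_avgIdem ρ hP).mem_iff_map_id]

lemma mem_breakComponent_succ {k : ℕ} (hP : HasInvertibleOrder R (P k)) (hle : P (k + 1) ≤ P k)
    {x : M} :
    x ∈ breakComponent ρ P (k + 1) ↔
      x ∈ subgroupInvariants ρ (P (k + 1)) ∧ ρ.asAlgebraHom (avgIdem R (P k)) x = 0 := by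
  have h_proj := isProj_asAlgebraHom_avgIdem ρ (hP.mono hle)
  constructor
  · intro hx
    have hx_inv : x ∈ subgroupInvariants ρ (P (k + 1)) := by
      rw [mem_breakComponent, brkIdem, if_neg k.succ_ne_zero, map_mul, Module.End.mul_apply] at hx
      exact hx ▸ h_proj.map_mem _
    rw [mem_breakComponent, asAlgebraHom_brkIdem_succ_apply hP hle, h_proj.map_id x hx_inv,
      sub_eq_self] at hx
    exact ⟨hx_inv, hx⟩
  · rintro ⟨hx_inv, hx_zero⟩
    rw [mem_breakComponent, asAlgebraHom_brkIdem_succ_apply hP hle, h_proj.map_id x hx_inv, hx_zero,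
      sub_zero]

variable {n : ℕ} (hP : AntitoneOn P (Set.Iic n)) (hP0 : HasInvertibleOrder R (P 0))
include hP hP0

lemma HasInvertibleOrder.of_antitoneOn {i : ℕ} (hi : i ≤ n) : HasInvertibleOrder R (P i) :=
  hP0.mono (hP n.zero_le hi i.zero_le)

lemma breakComponent_le_subgroupInvariants {i : ℕ} (hi : i ≤ n) :
    breakComponent ρ P i ≤ subgroupInvariants ρ (P i) := by
  cases i with
  | zero => exact fun x hx ↦ (mem_breakComponent_zero hP0).1 hx
  | succ k =>
    have hk : k ≤ n := k.le_succ.trans hi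
    exact fun x hx ↦ ((mem_breakComponent_succ (hP0.of_antitoneOn hP hk)
      (hP hk hi k.le_succ)).1 hx).1

lemma breakComponent_le_subgroupInvariants_of_le {i j : ℕ} (hij : i ≤ j) (hj : j ≤ n) :
    breakComponent ρ P i ≤ subgroupInvariants ρ (P j) :=
  (breakComponent_le_subgroupInvariants hP hP0 (hij.trans hj)).trans
    (subgroupInvariants_antitone ρ (hP (hij.trans hj) hj hij))

lemma disjoint_breakComponent_of_lt {i j : ℕ} (hij : i < j) (hj : j ≤ n) :
    Disjoint (breakComponent ρ P i) (breakComponent ρ P j) := by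
  obtain ⟨k, rfl⟩ := Nat.exists_eq_add_one_of_ne_zero hij.ne_bot
  have hk : k ≤ n := k.le_succ.trans hj
  have h_order := hP0.of_antitoneOn hP hk
  rw [Submodule.disjoint_def]
  intro x hxi hxj
  have hx_fixed : ρ.asAlgebraHom (avgIdem R (P k)) x = x :=
    (isProj_asAlgebraHom_avgIdem ρ h_order).map_id x
      (breakComponent_le_subgroupInvariants_of_le hP hP0 (Nat.le_of_lt_succ hij) hk hxi)
  rw [← hx_fixed]
  exact ((mem_breakComponent_succ h_order (hP hk hj k.le_succ)).1 hxj).2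

lemma disjoint_breakComponent {i j : ℕ} (hi : i ≤ n) (hj : j ≤ n) (hij : i ≠ j) :
    Disjoint (breakComponent ρ P i) (breakComponent ρ P j) :=
  hij.lt_or_gt.elim (disjoint_breakComponent_of_lt hP hP0 · hj)
    fun hji ↦ (disjoint_breakComponent_of_lt hP hP0 hji hi).symm

lemma tmul_mem_breakComponent_of_lt {i j : ℕ} (hij : i < j) (hj : j ≤ n) {x : M} {y : N}
    (hx : x ∈ breakComponent ρ P i) (hy : y ∈ breakComponent τ P j) :
    x ⊗ₜ[R] y ∈ breakComponent (ρ.tprod τ) P j := by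
  obtain ⟨k, rfl⟩ := Nat.exists_eq_add_one_of_ne_zero hij.ne_bot
  have hk : k ≤ n := k.le_succ.trans hj
  have hle : P (k + 1) ≤ P k := hP hk hj k.le_succ
  have h_order := hP0.of_antitoneOn hP hk
  have := h_order.finite
  have hx_inv : x ∈ subgroupInvariants ρ (P k) :=
    breakComponent_le_subgroupInvariants_of_le hP hP0 (Nat.le_of_lt_succ hij) hk hx
  obtain ⟨hy_inv, hy_zero⟩ := (mem_breakComponent_succ h_order hle).1 hy
  refine (mem_breakComponent_succ h_order hle).2
    ⟨tmul_mem_subgroupInvariants (subgroupInvariants_antitone ρ hle hx_inv) hy_inv, ?_⟩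
  rw [asAlgebraHom_avgIdem_tmul hx_inv, hy_zero, TensorProduct.tmul_zero]

lemma tmul_mem_breakComponent_max {i j : ℕ} (hi : i ≤ n) (hj : j ≤ n) (hij : i ≠ j) {x : M} {y : N}
    (hx : x ∈ breakComponent ρ P i) (hy : y ∈ breakComponent τ P j) :
    x ⊗ₜ[R] y ∈ breakComponent (ρ.tprod τ) P (max i j) := by
  rcases hij.lt_or_gt with hlt | hgt
  · rw [max_eq_right hlt.le]
    exact tmul_mem_breakComponent_of_lt hP hP0 hlt hj hx hy
  · rw [max_eq_left hgt.le]
    have comm_equivariant : (τ.tprod ρ).IsIntertwiningMap (ρ.tprod τ)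
        (_root_.TensorProduct.comm R N M).toLinearMap :=
      ⟨(Representation.TensorProduct.comm τ ρ).isIntertwining⟩
    exact map_mem_breakComponent comm_equivariant
      (tmul_mem_breakComponent_of_lt hP hP0 hgt hi hy hx)

lemma sum_asAlgebraHom_brkIdem_apply (ρ : Representation R H M) {i : ℕ} (hi : i ≤ n) (x : M) :
    ∑ j ∈ Finset.range (i + 1), ρ.asAlgebraHom (brkIdem R P j) x =
      ρ.asAlgebraHom (avgIdem R (P i)) x := by
  induction i with
  | zero => rw [Finset.sum_range_one, brkIdem_zero]
  | succ k ih =>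
    have hk : k ≤ n := k.le_succ.trans hi
    rw [Finset.sum_range_succ, ih hk, asAlgebraHom_brkIdem_succ_apply
      (hP0.of_antitoneOn hP hk) (hP hk hi k.le_succ), add_sub_cancel]

lemma sum_asAlgebraHom_brkIdem_tmul {i : ℕ} (hi : i ≤ n) {x : M} {y : N}
    (hx : x ∈ breakComponent ρ P i) (hy : y ∈ breakComponent τ P i) :
    ∑ j ∈ Finset.range (i + 1), (ρ.tprod τ).asAlgebraHom (brkIdem R P j) (x ⊗ₜ[R] y) =
      x ⊗ₜ[R] y := by
  rw [sum_asAlgebraHom_brkIdem_apply hP hP0 _ hi]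
  exact (isProj_asAlgebraHom_avgIdem _ (hP0.of_antitoneOn hP hi)).map_id _
    (tmul_mem_subgroupInvariants (breakComponent_le_subgroupInvariants hP hP0 hi hx)
      (breakComponent_le_subgroupInvariants hP hP0 hi hy))

end

theorem break_decomposition_hom_tensor_general {R H : Type*} [CommRing R] [Group H]
    {n : ℕ} {P : ℕ → Subgroup H} (hP : AntitoneOn P (Set.Iic n)) (hP0 : HasInvertibleOrder R (P 0))
    {M N : Type*} [AddCommGroup M] [Module R M] [AddCommGroup N] [Module R N]
    (ρ : Representation R H M) (τ : Representation R H N) :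
    (∀ φ : M →ₗ[R] N, ρ.IsIntertwiningMap τ φ →
      (∀ i, ∀ x ∈ breakComponent ρ P i, φ x ∈ breakComponent τ P i) ∧
      (∀ i j : ℕ, i ≤ n → j ≤ n → i ≠ j → ∀ x ∈ breakComponent ρ P i,
        φ x ∈ breakComponent τ P j → φ x = 0)) ∧
    (∀ i j : ℕ, i ≤ n → j ≤ n → i ≠ j → ∀ (x : M) (y : N),
      x ∈ breakComponent ρ P i → y ∈ breakComponent τ P j →
      x ⊗ₜ[R] y ∈ breakComponent (ρ.tprod τ) P (max i j)) ∧
    (∀ i ≤ n, ∀ (x : M) (y : N), x ∈ breakComponent ρ P i → y ∈ breakComponent τ P i →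
      ∑ j ∈ Finset.range (i + 1),
        (ρ.tprod τ).asAlgebraHom (brkIdem R P j) (x ⊗ₜ[R] y) = x ⊗ₜ[R] y) := by
  refine ⟨fun φ hφ ↦ ⟨fun i x hx ↦ map_mem_breakComponent hφ hx, ?_⟩, ?_, ?_⟩
  · intro i j hi hj hij x hx hφx
    exact Submodule.disjoint_def.1 (disjoint_breakComponent hP hP0 hi hj hij) (φ x)
      (map_mem_breakComponent hφ hx) hφx
  · exact fun i j hi hj hij x y hx hy ↦ tmul_mem_breakComponent_max hP hP0 hi hj hij hx hy
  · exact fun i hi x y hx hy ↦ sum_asAlgebraHom_brkIdem_tmul hP hP0 hi hx hy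

/-- The compatibilities (eq_estimate-break) of §3.1 of Chapter 4 (subsec_breaks), for
representations `ρ`, `τ` of `H` on `M`, `N` (equivalently, `R[H]`-modules), with break
components `M_{k-1} = {x | ρ(f_k) x = x}` (shifted indexing, `0 ≤ k ≤ n`):
(a) every `R[H]`-linear map `φ : M → N` maps each component of `M` into the corresponding
component of `N`; consequently any `R[H]`-linear map sending the `i`-th component into the
`j`-th component with `i ≠ j` vanishes on it;
(b) for the diagonal action on `M ⊗_R N`: if `i ≠ j` then `M_i ⊗ N_j` lands in the
component `max i j`, while `M_i ⊗ N_i` lands in the sum of the components `j ≤ i`. -/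
theorem break_decomposition_hom_tensor {R H : Type*} [CommRing R] [Group H] [Finite H]
    (p : ℕ) (hp : p.Prime) (hpR : IsUnit (p : R))
    (n : ℕ) (P : ℕ → Subgroup H)
    (hPp : IsPGroup p (P 0))
    (hchain : ∀ i j : ℕ, i ≤ j → j ≤ n → P j ≤ P i)
    (hbot : P n = ⊥)
    (hnorm : ∀ i ≤ n, (P i).Normal)
    {M N : Type*} [AddCommGroup M] [Module R M] [AddCommGroup N] [Module R N]
    (ρ : Representation R H M) (τ : Representation R H N) :
    -- (a) equivariant maps respect the break decomposition …
    (∀ φ : M →ₗ[R] N, (∀ (g : H) (x : M), φ (ρ g x) = τ g (φ x)) →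
      (∀ i ≤ n, ∀ x : M, ρ.asAlgebraHom (brkIdem R P i) x = x →
        τ.asAlgebraHom (brkIdem R P i) (φ x) = φ x) ∧
      (∀ i j : ℕ, i ≤ n → j ≤ n → i ≠ j → ∀ x : M,
        ρ.asAlgebraHom (brkIdem R P i) x = x →
        τ.asAlgebraHom (brkIdem R P j) (φ x) = φ x → φ x = 0)) ∧
    -- (b) behaviour under tensor products (diagonal action) : distinct breaks …
    (∀ i j : ℕ, i ≤ n → j ≤ n → i ≠ j → ∀ (x : M) (y : N),
      ρ.asAlgebraHom (brkIdem R P i) x = x →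
      τ.asAlgebraHom (brkIdem R P j) y = y →
      (ρ.tprod τ).asAlgebraHom (brkIdem R P (max i j)) (x ⊗ₜ[R] y) = x ⊗ₜ[R] y) ∧
    -- … and equal breaks
    (∀ i ≤ n, ∀ (x : M) (y : N),
      ρ.asAlgebraHom (brkIdem R P i) x = x →
      τ.asAlgebraHom (brkIdem R P i) y = y →
      ∑ j ∈ Finset.range (i + 1),
        (ρ.tprod τ).asAlgebraHom (brkIdem R P j) (x ⊗ₜ[R] y) = x ⊗ₜ[R] y) := by
  have hP : AntitoneOn P (Set.Iic n) := fun i _ j hj hij ↦ hchain i j hij hj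
  obtain ⟨hom_compat, tensor_compat⟩ :=
    break_decomposition_hom_tensor_general hP (.of_isPGroup hp hpR hPp) ρ τ
  exact ⟨fun φ hφ ↦ (hom_compat φ ⟨hφ⟩).imp_left fun h i _ ↦ h i, tensor_compat⟩
end

section
/- Let s : ℝ → ℝ be a function that is convex on the half-line [0, ∞), and suppose that for every nonnegative rational number q, the value s(q) is a rational number whose denominator (in lowest terms) divides the denominator of q. Then for every positive rational q the right derivative of s at q, that is the limit lim_{h → 0⁺} (s(q + h) − s(q))/h (which exists by convexity), is an integer; consequently, by the right-continuity and monotonicity of the right derivative of a convex function, the right derivative of s at every real x > 0 is an integer, and s is piecewise linear with integer slopes on (0, ∞). -/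
/-!
Every rational `q` has right neighbours `p` arbitrarily close to it with
`p - q = 1 / (p.den * q.den)`. Since `s p` and `s q` have denominators dividing `p.den` and `q.den`,
the slope of `s` from `q` to `p` is an integer, and so is its limit, the right derivative of `s` at
`q`. The right derivative is monotone, so immediately to the right of any point it is a constant
integer `m`, which forces `s` to be affine of slope `m` there.
-/

open Filter Set Topology

/-- `p` is a right Farey neighbour of `q`: in lowest terms, the determinant of the two fractions
is `1`, so that `p` follows `q` in some Farey sequence. -/
def IsRightFareyNeighbor (q p : ℚ) : Prop :=
  p.num * q.den - q.num * p.den = 1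

namespace IsRightFareyNeighbor

variable {p q : ℚ}

theorem sub_eq_inv (h : IsRightFareyNeighbor q p) : p - q = ((p.den : ℚ) * q.den)⁻¹ := by
  have hdet : (p.num : ℚ) * q.den - q.num * p.den = 1 := mod_cast h
  rw [← Rat.mul_den_eq_num p, ← Rat.mul_den_eq_num q] at hdet
  exact eq_inv_of_mul_eq_one_left (by linear_combination hdet)

theorem lt (h : IsRightFareyNeighbor q p) : q < p := by
  rw [← sub_pos, h.sub_eq_inv]
  positivity

theorem exists_lt_den (q : ℚ) (N : ℕ) : ∃ p, IsRightFareyNeighbor q p ∧ N < p.den := by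
  obtain ⟨v, u, huv⟩ : IsCoprime q.num (q.den : ℤ) := Rat.isCoprime_num_den q
  -- All integer solutions of `w * q.den - q.num * n = 1` are `(w, n) = (u, -v) + k (q.num, q.den)`.
  let k : ℤ := N + |v| + 1
  let w : ℤ := u + k * q.num
  let n : ℤ := -v + k * q.den
  have hdet : w * q.den - q.num * n = 1 := by linear_combination huv
  have hNn : (N : ℤ) < n := by
    have hk : k ≤ k * q.den := le_mul_of_one_le_right (by positivity) (mod_cast q.den_pos)
    linarith [le_abs_self v]
  have hn : 0 < n := N.cast_nonneg.trans_lt hNn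
  have hcop : w.natAbs.Coprime n.natAbs :=
    Int.isCoprime_iff_gcd_eq_one.mp ⟨q.den, -q.num, by linear_combination hdet⟩
  have hnum : ((w : ℚ) / n).num = w := Rat.num_div_eq_of_coprime hn hcop
  have hden : (((w : ℚ) / n).den : ℤ) = n := Rat.den_div_eq_of_coprime hn hcop
  refine ⟨w / n, ?_, ?_⟩
  · rwa [IsRightFareyNeighbor, hnum, hden]
  · rwa [← Int.ofNat_lt, hden]

theorem exists_lt {a : ℚ} (hqa : q < a) : ∃ p, IsRightFareyNeighbor q p ∧ p < a := by
  obtain ⟨N, hN⟩ := exists_nat_gt (a - q)⁻¹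
  obtain ⟨p, hp, hNp⟩ := exists_lt_den q N
  refine ⟨p, hp, sub_lt_sub_iff_right q |>.mp ?_⟩
  rw [hp.sub_eq_inv]
  refine inv_lt_of_inv_lt₀ (sub_pos.mpr hqa) ?_
  calc (a - q)⁻¹ < N := hN
    _ ≤ p.den := mod_cast hNp.le
    _ ≤ p.den * q.den := le_mul_of_one_le_right (by positivity) (mod_cast q.den_pos)

end IsRightFareyNeighbor

theorem exists_intCast_eq_mul_of_den_dvd {r : ℚ} {n : ℕ} (h : r.den ∣ n) :
    ∃ k : ℤ, (k : ℚ) = r * n := by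
  obtain ⟨c, rfl⟩ := h
  refine ⟨r.num * c, ?_⟩
  push_cast
  rw [← mul_assoc, Rat.mul_den_eq_num]

/-- At every rational point of `U`, the function `s` takes a rational value whose reduced
denominator divides that of the point. -/
def DenDvdOn (s : ℝ → ℝ) (U : Set ℝ) : Prop :=
  ∀ q : ℚ, (q : ℝ) ∈ U → ∃ r : ℚ, s q = r ∧ r.den ∣ q.den

namespace DenDvdOn

variable {s : ℝ → ℝ} {U : Set ℝ} {p q : ℚ}

theorem slope_mem_range_intCast (hs : DenDvdOn s U) (hq : (q : ℝ) ∈ U) (hp : (p : ℝ) ∈ U)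
    (hqp : IsRightFareyNeighbor q p) : slope s q p ∈ range ((↑) : ℤ → ℝ) := by
  obtain ⟨a, hsq, ha⟩ := hs q hq
  obtain ⟨b, hsp, hb⟩ := hs p hp
  obtain ⟨k, hk⟩ := exists_intCast_eq_mul_of_den_dvd ha
  obtain ⟨l, hl⟩ := exists_intCast_eq_mul_of_den_dvd hb
  have hslope : (b - a) / (p - q) = l * q.den - k * p.den := by
    rw [hqp.sub_eq_inv, div_inv_eq_mul, hk, hl]
    ring
  refine ⟨l * q.den - k * p.den, ?_⟩
  rw [slope_def_field, hsq, hsp]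
  exact_mod_cast hslope.symm

theorem frequently_slope_mem_range_intCast (hs : DenDvdOn s U) (hU : U ∈ 𝓝[≥] (q : ℝ)) :
    ∃ᶠ y in 𝓝[>] (q : ℝ), slope s q y ∈ range ((↑) : ℤ → ℝ) := by
  refine ((nhdsGT_basis (q : ℝ)).frequently_iff).mpr fun b hqb ↦ ?_
  obtain ⟨c, hqc, hcU⟩ := mem_nhdsGE_iff_exists_Ico_subset.mp hU
  obtain ⟨a, hqa, ha⟩ := exists_rat_btwn (lt_min hqb hqc)
  obtain ⟨p, hqp, hpa⟩ := IsRightFareyNeighbor.exists_lt (mod_cast hqa : q < a)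
  have hqp' : (q : ℝ) < p := mod_cast hqp.lt
  have hp : (p : ℝ) < min b c := lt_trans (mod_cast hpa) ha
  refine ⟨p, ⟨hqp', hp.trans_le (min_le_left b c)⟩, hs.slope_mem_range_intCast ?_ ?_ hqp⟩
  · exact hcU (left_mem_Ico.mpr hqc)
  · exact hcU ⟨hqp'.le, hp.trans_le (min_le_right b c)⟩

theorem rightDeriv_mem_range_intCast (hs : DenDvdOn s U) (hU : U ∈ 𝓝[≥] (q : ℝ)) {d : ℝ}
    (hd : HasDerivWithinAt s d (Ioi q) q) : d ∈ range ((↑) : ℤ → ℝ) :=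
  Real.isClosed_range_intCast.mem_of_frequently_of_tendsto
    (hs.frequently_slope_mem_range_intCast hU)
    ((hasDerivWithinAt_iff_tendsto_slope' self_notMem_Ioi).mp hd)

end DenDvdOn

theorem eventually_eq_intCast_nhdsGT_of_monotoneOn {α : Type*} [TopologicalSpace α] [LinearOrder α]
    [OrderTopology α] [DenselyOrdered α] {f : α → ℝ} {t : Set α} (ht : Dense t) {x b : α}
    (hxb : x < b) (hf : MonotoneOn f (Ico x b))
    (hint : ∀ y ∈ t ∩ Ioo x b, f y ∈ range ((↑) : ℤ → ℝ)) :
    ∃ m : ℤ, ∀ᶠ y in 𝓝[>] x, f y = m := by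
  obtain ⟨m, ⟨z, hz, hfz⟩, hmin⟩ := Int.exists_least_of_bdd
    (P := fun m : ℤ ↦ ∃ y ∈ t ∩ Ioo x b, f y = m)
    ⟨⌊f x⌋, by
      rintro m ⟨y, ⟨-, hy⟩, hfy⟩
      rw [← Int.floor_intCast (R := ℝ) m, ← hfy]
      exact Int.floor_mono (hf (left_mem_Ico.mpr hxb) (Ioo_subset_Ico_self hy) hy.1.le)⟩
    (by
      obtain ⟨y, hyt, hy⟩ := ht.exists_between hxb
      obtain ⟨m, hm⟩ := hint y ⟨hyt, hy⟩
      exact ⟨m, y, ⟨hyt, hy⟩, hm.symm⟩)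
  refine ⟨m, ?_⟩
  filter_upwards [Ioo_mem_nhdsGT hz.2.1] with y hy
  obtain ⟨u, hut, hu⟩ := ht.exists_between hy.1
  have hyb : y ∈ Ico x b := ⟨hy.1.le, hy.2.trans hz.2.2⟩
  have hub : u ∈ Ioo x b := ⟨hu.1, hu.2.trans hyb.2⟩
  obtain ⟨k, hk⟩ := hint u ⟨hut, hub⟩
  apply le_antisymm
  · exact (hf hyb (Ioo_subset_Ico_self hz.2) hy.2.le).trans_eq hfz
  · calc (m : ℝ) ≤ k := mod_cast hmin k ⟨u, ⟨hut, hub⟩, hk.symm⟩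
      _ = f u := hk
      _ ≤ f y := hf (Ioo_subset_Ico_self hub) hyb hu.2.le

section Convex

variable {S : Set ℝ} {s : ℝ → ℝ} {x : ℝ}

theorem slope_eq_of_convexOn_of_rightDeriv_eq (hs : ConvexOn ℝ S s) {y z m : ℝ}
    (hy : y ∈ interior S) (hz : z ∈ interior S) (hyz : y < z)
    (hmy : derivWithin s (Ioi y) y = m) (hmz : derivWithin s (Ioi z) z = m) :
    slope s y z = m := by
  apply le_antisymm
  · calc slope s y z ≤ derivWithin s (Iio z) z :=
          hs.slope_le_leftDeriv_of_mem_interior (interior_subset hy) hz hyz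
      _ ≤ derivWithin s (Ioi z) z := hs.leftDeriv_le_rightDeriv_of_mem_interior hz
      _ = m := hmz
  · exact hmy.symm.trans_le (hs.rightDeriv_le_slope_of_mem_interior hy (interior_subset hz) hyz)

theorem eventually_eq_affine_of_convexOn_of_rightDeriv_eq (hs : ConvexOn ℝ S s)
    (hx : x ∈ interior S) {m : ℝ} (hm : ∀ᶠ y in 𝓝[>] x, derivWithin s (Ioi y) y = m) :
    ∃ c, ∀ᶠ y in 𝓝[≥] x, s y = m * y + c := by
  have hS : ∀ᶠ y in 𝓝[>] x, y ∈ interior S := nhdsWithin_le_nhds (isOpen_interior.mem_nhds hx)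
  obtain ⟨b, hxb, hb⟩ := mem_nhdsGT_iff_exists_Ioo_subset.mp (hS.and hm)
  obtain ⟨z, hxz, hzb⟩ := exists_between (mem_Ioi.mp hxb)
  have hIoo : EqOn s (fun y ↦ m * y + (s z - m * z)) (Ioo x z) := fun y hy ↦ by
    have hyS := hb ⟨hy.1, hy.2.trans hzb⟩
    have hzS := hb ⟨hxz, hzb⟩
    have hslope := slope_eq_of_convexOn_of_rightDeriv_eq hs hyS.1 hzS.1 hy.2 hyS.2 hzS.2
    rw [slope_def_field, div_eq_iff (sub_pos.mpr hy.2).ne'] at hslope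
    linear_combination -hslope
  have hcont : ContinuousOn s (Ico x z) := hs.continuousOn_interior.mono fun y hy ↦ by
    rcases hy.1.eq_or_lt with rfl | hxy
    exacts [hx, (hb ⟨hxy, hy.2.trans hzb⟩).1]
  have hIco : EqOn s (fun y ↦ m * y + (s z - m * z)) (Ico x z) :=
    hIoo.of_subset_closure hcont (by fun_prop) Ioo_subset_Ico_self
      (closure_Ioo hxz.ne ▸ Ico_subset_Icc_self)
  exact ⟨s z - m * z, mem_of_superset (Ico_mem_nhdsGE hxz) hIco⟩

theorem exists_int_eventually_eq_affine (hs : ConvexOn ℝ S s) (hden : DenDvdOn s (interior S))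
    (hx : x ∈ interior S) : ∃ (m : ℤ) (c : ℝ), ∀ᶠ y in 𝓝[≥] x, s y = m * y + c := by
  have hS : interior S ∈ 𝓝[≥] x := nhdsWithin_le_nhds (isOpen_interior.mem_nhds hx)
  obtain ⟨b, hxb, hb⟩ := mem_nhdsGE_iff_exists_Ico_subset.mp hS
  obtain ⟨m, hm⟩ := eventually_eq_intCast_nhdsGT_of_monotoneOn Rat.denseRange_cast hxb
    (hs.monotoneOn_rightDeriv.mono hb) <| by
      rintro _ ⟨⟨q, rfl⟩, hq⟩
      have hqS := hb (Ioo_subset_Ico_self hq)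
      exact hden.rightDeriv_mem_range_intCast (nhdsWithin_le_nhds (isOpen_interior.mem_nhds hqS))
        (hs.hasDerivWithinAt_rightDeriv_of_mem_interior hqS)
  exact ⟨m, eventually_eq_affine_of_convexOn_of_rightDeriv_eq hs hx hm⟩

end Convex

theorem tendsto_slope_zero_right_of_eventually_eq_affine {s : ℝ → ℝ} {x m c : ℝ}
    (h : ∀ᶠ y in 𝓝[≥] x, s y = m * y + c) :
    Tendsto (fun h ↦ (s (x + h) - s x) / h) (𝓝[>] 0) (𝓝 m) := by
  obtain ⟨b, hxb, hb⟩ := mem_nhdsGE_iff_exists_Ico_subset.mp h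
  refine tendsto_const_nhds.congr' ?_
  filter_upwards [Ioo_mem_nhdsGT (sub_pos.mpr hxb)] with t ⟨ht_pos, ht_lt⟩
  have hsx : s x = m * x + c := hb (left_mem_Ico.mpr hxb)
  have hsxt : s (x + t) = m * (x + t) + c := hb ⟨by linarith, by linarith⟩
  rw [hsx, hsxt, eq_div_iff ht_pos.ne']
  ring

theorem convex_rational_denominator_slopes_general {S : Set ℝ} {s : ℝ → ℝ}
    (hconv : ConvexOn ℝ S s) (hrat : DenDvdOn s (interior S)) {x : ℝ} (hx : x ∈ interior S) :
    ∃ m : ℤ, Tendsto (fun h ↦ (s (x + h) - s x) / h) (𝓝[>] 0) (𝓝 m) ∧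
      ∃ c ε : ℝ, 0 < ε ∧ ∀ y ∈ Ico x (x + ε), s y = m * y + c := by
  obtain ⟨m, c, hmc⟩ := exists_int_eventually_eq_affine hconv hrat hx
  obtain ⟨b, hxb, hb⟩ := mem_nhdsGE_iff_exists_Ico_subset.mp hmc
  exact ⟨m, tendsto_slope_zero_right_of_eventually_eq_affine hmc, c, b - x, sub_pos.mpr hxb,
    by rwa [add_sub_cancel]⟩

/-- Claim cl_integral-slope in the proof of Theorem 4.10 (th_Newton(iii)): let
`s : ℝ → ℝ` be convex on `[0, ∞)` and suppose that for every rational `q ≥ 0`, `s q` is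
a rational number whose denominator divides the denominator of `q`.  Then the right
derivative of `s` (which exists by convexity) is an integer at every positive rational,
hence — by right-continuity and monotonicity of the right derivative of a convex
function — at every positive real, and `s` is piecewise linear with integer slopes on
`(0, ∞)`. -/
theorem convex_rational_denominator_slopes (s : ℝ → ℝ)
    (hconv : ConvexOn ℝ (Set.Ici (0 : ℝ)) s)
    (hrat : ∀ q : ℚ, 0 ≤ q → ∃ r : ℚ, s (q : ℝ) = (r : ℝ) ∧ r.den ∣ q.den) :
    (∀ q : ℚ, 0 < q → ∃ m : ℤ,
      Filter.Tendsto (fun h : ℝ => (s ((q : ℝ) + h) - s (q : ℝ)) / h)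
        (nhdsWithin 0 (Set.Ioi 0)) (nhds (m : ℝ))) ∧
    (∀ x : ℝ, 0 < x → ∃ m : ℤ,
      Filter.Tendsto (fun h : ℝ => (s (x + h) - s x) / h)
        (nhdsWithin 0 (Set.Ioi 0)) (nhds (m : ℝ))) ∧
    (∀ x : ℝ, 0 < x → ∃ (m : ℤ) (c : ℝ) (ε : ℝ), 0 < ε ∧
      ∀ y ∈ Set.Ico x (x + ε), s y = (m : ℝ) * y + c) := by
  have hgen (x : ℝ) (hx : 0 < x) := convex_rational_denominator_slopes_general hconv
    (fun q hq ↦ hrat q (Rat.cast_nonneg.mp (interior_subset hq))) (by rwa [interior_Ici])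
  have hderiv (x : ℝ) (hx : 0 < x) := (hgen x hx).imp fun _ ↦ And.left
  exact ⟨fun q hq ↦ hderiv q (mod_cast hq), hderiv, fun x hx ↦ (hgen x hx).imp fun _ ↦ And.right⟩
end
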